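/- arXiv:2602.05593 — 2 statements merged into one kernel-verified Lean document; each statement's English description precedes it below -/
import Mathlib

section
/- Let t = Σ_{n=1}^∞ 1/(10↑↑(3n)) and let X_t be the topological support of the self-similar measure μ_t. There exist a monotonically decreasing sequence of positive reals ψ(1), ψ(2), … and a real γ ∈ (0,1) such that: (1) limsup_{N → ∞} (log Ψ(N)) / (log N) = 1, where Ψ(N) = Σ_{n=1}^N ψ(n) (so in particular Ψ(N) → ∞); and (2) for all x ∈ X_t and all N ∈ ℕ, the set {n : 1 ≤ n ≤ N and dist(10^{n−1} x − γ, ℤ) ≤ ψ(n)} is empty, i.e. for every n ≥ 1 and every integer m, |10^{n−1} x − γ − m| > ψ(n). -/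
open MeasureTheory Filter Set
open scoped ENNReal NNReal

/-- Knuth's up-arrow tower: `tow n = 10↑↑n`, with `tow 0 = 1` so that `tow 1 = 10`. -/
def tow : ℕ → ℕ
  | 0 => 1
  | n + 1 => 10 ^ tow n

/-- `μ_t` is invariant for the IFS `{x/10, (x+1)/10, (x+t)/10}` with weights `(1/3,1/3,1/3)`. -/
def muInv (t : ℝ) (μ : Measure ℝ) : Prop :=
  μ = (3 : ℝ≥0∞)⁻¹ • (Measure.map (fun x : ℝ => x / 10) μ +
    Measure.map (fun x : ℝ => (x + 1) / 10) μ + Measure.map (fun x : ℝ => (x + t) / 10) μ)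

/-- The topological support of a measure on `ℝ`. -/
def msupport (μ : Measure ℝ) : Set ℝ := {x | ∀ ε > 0, 0 < μ (Metric.ball x ε)}

lemma tow_ge (n : ℕ) : n + 1 ≤ tow n := by
  induction n with
  | zero => simp [tow]
  | succ n ih =>
    have : tow n < 10 ^ tow n := Nat.lt_pow_self (by norm_num)
    simp only [tow]; omega

lemma tow_lt (n : ℕ) : tow n < tow (n+1) := by
  show tow n < 10 ^ tow n
  exact Nat.lt_pow_self (by norm_num)

lemma tow_strictMono : StrictMono tow := strictMono_nat_of_lt_succ tow_lt

/-- The exponents: `t = ∑ 10^{-U k}`. -/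
def UU (k : ℕ) : ℕ := tow (3 * k + 2)

lemma UU_ge (k : ℕ) : k + 3 ≤ UU k := by
  have := tow_ge (3*k+2)
  unfold UU; omega

lemma UU_strictMono : StrictMono UU := by
  intro a b h
  exact tow_strictMono (by omega)

lemma UU_succ (k : ℕ) : 10 ^ (UU k ^ 2) + 2 * UU k ≤ UU (k+1) := by
  set u := UU k with hu
  have h3 : k + 3 ≤ u := UU_ge k
  have e : UU (k+1) = 10 ^ (10 ^ (10 ^ u)) := rfl
  rw [e]
  have h1 : u + 1 ≤ 2 ^ u := Nat.lt_pow_self (by norm_num)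
  have h2 : u ^ 2 + 1 ≤ 10 ^ u := by
    calc u ^ 2 + 1 ≤ (u+1)^2 := by nlinarith
      _ ≤ (2^u)^2 := Nat.pow_le_pow_left h1 2
      _ = 4 ^ u := by rw [← pow_mul, mul_comm, pow_mul]; norm_num
      _ ≤ 10 ^ u := Nat.pow_le_pow_left (by norm_num) u
  have h4 : 10 ^ u ≤ 10 ^ (10 ^ u) := (Nat.lt_pow_self (by norm_num)).le
  have h5 : 10 ^ (u^2+1) ≤ 10 ^ (10 ^ (10 ^ u)) :=
    Nat.pow_le_pow_right (by norm_num) (h2.trans h4)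
  have h6 : u ^ 2 < 10 ^ (u^2) := Nat.lt_pow_self (by norm_num)
  have h7 : 2 * u ≤ u ^ 2 := by nlinarith
  rw [pow_succ] at h5
  omega

/-- terms of the series -/
lemma term_eq (n : ℕ) : (1 : ℝ) / (tow (3 * (n + 1)) : ℝ) = (1/10 : ℝ) ^ (UU n) := by
  have : tow (3 * (n+1)) = 10 ^ UU n := rfl
  rw [this]; push_cast; rw [one_div, one_div, inv_pow]

lemma UU_add (K i : ℕ) : UU K + i ≤ UU (i + K) := by
  induction i with
  | zero => simp
  | succ i ih =>
    have : UU (i+K) < UU (i + 1 + K) := UU_strictMono (by omega)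
    omega

lemma term_le (K i : ℕ) : (1/10 : ℝ) ^ (UU (i + K)) ≤ (1/10:ℝ)^(UU K) * (1/10)^i := by
  rw [← pow_add]
  exact pow_le_pow_of_le_one (by norm_num) (by norm_num) (UU_add K i)

lemma geo_summable (K : ℕ) : Summable fun i => (1/10:ℝ)^(UU K) * (1/10)^i :=
  (summable_geometric_of_lt_one (by norm_num) (by norm_num)).mul_left _

lemma tail_summable (K : ℕ) : Summable fun i => (1/10 : ℝ) ^ (UU (i + K)) :=
  Summable.of_nonneg_of_le (fun i => by positivity) (term_le K) (geo_summable K)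

lemma tail_le (K : ℕ) : ∑' i, (1/10 : ℝ) ^ (UU (i + K)) ≤ 2 * (1/10:ℝ)^(UU K) := by
  refine ((tail_summable K).tsum_le_tsum (term_le K) (geo_summable K)).trans ?_
  rw [tsum_mul_left, tsum_geometric_of_lt_one (by norm_num) (by norm_num)]
  have : 0 < (1/10:ℝ)^(UU K) := by positivity
  norm_num only
  linarith

lemma tail_nonneg (K : ℕ) : 0 ≤ ∑' i, (1/10 : ℝ) ^ (UU (i + K)) :=
  tsum_nonneg fun i => by positivity

/-- partial sums `t_k = ∑_{j ≤ k} 10^{-U j}` -/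
noncomputable def tp (k : ℕ) : ℝ := ∑ i ∈ Finset.range (k+1), (1/10 : ℝ) ^ (UU i)

lemma tp_int (k : ℕ) : ∃ z : ℤ, (10:ℝ)^(UU k) * tp k = z := by
  refine ⟨∑ i ∈ Finset.range (k+1), 10 ^ (UU k - UU i), ?_⟩
  push_cast
  rw [tp, Finset.mul_sum]
  refine Finset.sum_congr rfl fun i hi => ?_
  have hle : UU i ≤ UU k := UU_strictMono.monotone (by simpa [Nat.lt_succ_iff] using hi)
  obtain ⟨d, hd⟩ := Nat.exists_eq_add_of_le hle
  rw [hd, Nat.add_sub_cancel_left, pow_add, one_div, inv_pow]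
  field_simp

lemma split (t : ℝ) (ht : t = ∑' n : ℕ, (1 : ℝ) / (tow (3 * (n + 1)) : ℝ)) (k : ℕ) :
    0 ≤ t - tp k ∧ t - tp k ≤ 2 * (1/10:ℝ)^(UU (k+1)) := by
  have h := (tail_summable 0).sum_add_tsum_nat_add (k+1)
  simp only [add_zero] at h
  have : t = ∑' n, (1/10 : ℝ) ^ (UU n) := by rw [ht]; exact tsum_congr term_eq
  rw [this, ← h, tp, add_sub_cancel_left]
  exact ⟨tail_nonneg _, tail_le _⟩

lemma t_bd (t : ℝ) (ht : t = ∑' n : ℕ, (1 : ℝ) / (tow (3 * (n + 1)) : ℝ)) :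
    0 ≤ t ∧ t ≤ 1 := by
  have : t = ∑' n, (1/10 : ℝ) ^ (UU (n+0)) := by rw [ht]; exact tsum_congr term_eq
  rw [this]
  refine ⟨tail_nonneg 0, (tail_le 0).trans ?_⟩
  have : (1/10:ℝ)^(UU 0) ≤ (1/10:ℝ)^1 :=
    pow_le_pow_of_le_one (by norm_num) (by norm_num) (by have := UU_ge 0; omega)
  linarith

/-- naturals with `L` decimal digits, all 0 or 1 -/
def BB : ℕ → Finset ℕ
  | 0 => {0}
  | L + 1 => (BB L).image (fun a => 10 * a) ∪ (BB L).image (fun a => 10 * a + 1)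

lemma BB_card (L : ℕ) : (BB L).card ≤ 2 ^ L := by
  induction L with
  | zero => simp [BB]
  | succ L ih =>
    rw [BB]
    refine (Finset.card_union_le _ _).trans ?_
    have h1 := Finset.card_image_le (s := BB L) (f := fun a => 10 * a)
    have h2 := Finset.card_image_le (s := BB L) (f := fun a => 10 * a + 1)
    rw [pow_succ]; omega

lemma BB_succ (L a : ℕ) : a ∈ BB (L+1) ↔ ∃ b ∈ BB L, a = 10 * b ∨ a = 10 * b + 1 := by
  simp only [BB, Finset.mem_union, Finset.mem_image]
  constructor
  · rintro (⟨b, hb, rfl⟩ | ⟨b, hb, rfl⟩)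
    · exact ⟨b, hb, Or.inl rfl⟩
    · exact ⟨b, hb, Or.inr rfl⟩
  · rintro ⟨b, hb, rfl | rfl⟩
    · exact Or.inl ⟨b, hb, rfl⟩
    · exact Or.inr ⟨b, hb, rfl⟩

lemma BB_lt (L : ℕ) : ∀ a ∈ BB L, a < 10 ^ L := by
  induction L with
  | zero => simp [BB]
  | succ L ih =>
    intro a ha
    obtain ⟨b, hb, h⟩ := (BB_succ L a).1 ha
    have := ih b hb
    rw [pow_succ]; omega

lemma BB_zero (L : ℕ) : 0 ∈ BB L := by
  induction L with
  | zero => simp [BB]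
  | succ L ih => exact (BB_succ L 0).2 ⟨0, ih, Or.inl rfl⟩

lemma BB_mod (M : ℕ) : ∀ L, ∀ a ∈ BB L, a % 10 ^ M ∈ BB M := by
  induction M with
  | zero => intro L a _; simp [BB, Nat.mod_one]
  | succ M ih =>
    intro L a ha
    cases L with
    | zero =>
      have : a = 0 := by simpa [BB] using ha
      subst this; simpa using BB_zero (M+1)
    | succ L =>
      obtain ⟨b, hb, h⟩ := (BB_succ L a).1 ha
      refine (BB_succ M _).2 ⟨b % 10 ^ M, ih L b hb, ?_⟩
      have hp : 10 ^ (M+1) = 10 * 10 ^ M := by ring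
      rcases h with rfl | rfl
      · left; rw [hp, Nat.mul_mod_mul_left]
      · right
        rw [hp, Nat.mod_mul]
        have h1 : (10 * b + 1) % 10 = 1 := by omega
        have h2 : (10 * b + 1) / 10 = b := by omega
        rw [h1, h2]; ring

/-- Values `10^L ∑_{i ≤ L} d_i 10^{-i}` with `d_i ∈ {0,1,t}` -/
noncomputable def CC (t : ℝ) : ℕ → Finset ℝ
  | 0 => {0}
  | L + 1 => ((CC t L).image (fun a => 10 * a) ∪ (CC t L).image (fun a => 10 * a + 1)) ∪
      (CC t L).image (fun a => 10 * a + t)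

lemma CC_card (t : ℝ) (L : ℕ) : (CC t L).card ≤ 3 ^ L := by
  induction L with
  | zero => simp [CC]
  | succ L ih =>
    rw [CC]
    refine (Finset.card_union_le _ _).trans ?_
    have h0 := Finset.card_union_le ((CC t L).image (fun a => 10 * a))
      ((CC t L).image (fun a => 10 * a + 1))
    have h1 := Finset.card_image_le (s := CC t L) (f := fun a => 10 * a)
    have h2 := Finset.card_image_le (s := CC t L) (f := fun a => 10 * a + 1)
    have h3 := Finset.card_image_le (s := CC t L) (f := fun a => 10 * a + t)
    rw [pow_succ]; omega

lemma CC_succ (t : ℝ) (L : ℕ) (a : ℝ) : a ∈ CC t (L+1) ↔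
    ∃ b ∈ CC t L, a = 10 * b ∨ a = 10 * b + 1 ∨ a = 10 * b + t := by
  simp only [CC, Finset.mem_union, Finset.mem_image]
  constructor
  · rintro ((⟨b, hb, rfl⟩ | ⟨b, hb, rfl⟩) | ⟨b, hb, rfl⟩)
    · exact ⟨b, hb, Or.inl rfl⟩
    · exact ⟨b, hb, Or.inr (Or.inl rfl)⟩
    · exact ⟨b, hb, Or.inr (Or.inr rfl)⟩
  · rintro ⟨b, hb, rfl | rfl | rfl⟩
    · exact Or.inl (Or.inl ⟨b, hb, rfl⟩)
    · exact Or.inl (Or.inr ⟨b, hb, rfl⟩)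
    · exact Or.inr ⟨b, hb, rfl⟩

lemma CC_form (t : ℝ) (L : ℕ) : ∀ c ∈ CC t L, ∃ z : ℤ, ∃ a ∈ BB L, c = z + a * t := by
  induction L with
  | zero => intro c hc; exact ⟨0, 0, by simp [BB], by simpa [CC] using hc⟩
  | succ L ih =>
    intro c hc
    obtain ⟨b, hb, h⟩ := (CC_succ t L c).1 hc
    obtain ⟨z, a, ha, rfl⟩ := ih b hb
    rcases h with rfl | rfl | rfl
    · exact ⟨10 * z, 10 * a, (BB_succ _ _).2 ⟨a, ha, Or.inl rfl⟩, by push_cast; ring⟩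
    · exact ⟨10 * z + 1, 10 * a, (BB_succ _ _).2 ⟨a, ha, Or.inl rfl⟩, by push_cast; ring⟩
    · exact ⟨10 * z, 10 * a + 1, (BB_succ _ _).2 ⟨a, ha, Or.inr rfl⟩, by push_cast; ring⟩

/-! ### the support -/

lemma muInv_apply {t : ℝ} {μ : Measure ℝ} (hinv : muInv t μ) {s : Set ℝ} (hs : MeasurableSet s) :
    μ s = (3 : ℝ≥0∞)⁻¹ * (μ ((fun x : ℝ => x / 10) ⁻¹' s) +
      μ ((fun x : ℝ => (x + 1) / 10) ⁻¹' s) + μ ((fun x : ℝ => (x + t) / 10) ⁻¹' s)) := by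
  have h1 : Measurable (fun x : ℝ => x / 10) := by fun_prop
  have h2 : Measurable (fun x : ℝ => (x + 1) / 10) := by fun_prop
  have h3 : Measurable (fun x : ℝ => (x + t) / 10) := by fun_prop
  conv_lhs => rw [show μ = _ from hinv]
  rw [Measure.smul_apply, Measure.add_apply, Measure.add_apply, Measure.map_apply h1 hs,
    Measure.map_apply h2 hs, Measure.map_apply h3 hs, smul_eq_mul]

lemma supp_step {t : ℝ} {μ : Measure ℝ} (hinv : muInv t μ) {x : ℝ} (hx : x ∈ msupport μ) :
    10 * x ∈ msupport μ ∨ 10 * x - 1 ∈ msupport μ ∨ 10 * x - t ∈ msupport μ := by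
  by_contra! hcon
  obtain ⟨h1, h2, h3⟩ := hcon
  simp only [msupport, Set.mem_ofPred_eq, not_forall, not_lt, nonpos_iff_eq_zero,
    exists_prop] at h1 h2 h3
  obtain ⟨e1, p1, h1⟩ := h1
  obtain ⟨e2, p2, h2⟩ := h2
  obtain ⟨e3, p3, h3⟩ := h3
  set e := min e1 (min e2 e3) with he
  have pe : 0 < e := by positivity
  have l1 : e ≤ e1 := min_le_left _ _
  have l2 : e ≤ e2 := (min_le_right _ _).trans (min_le_left _ _)
  have l3 : e ≤ e3 := (min_le_right _ _).trans (min_le_right _ _)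
  have hpos := hx (e/10) (by positivity)
  rw [muInv_apply hinv Metric.isOpen_ball.measurableSet] at hpos
  have k1 : μ ((fun x : ℝ => x / 10) ⁻¹' Metric.ball x (e/10)) = 0 := by
    refine measure_mono_null (fun y hy => ?_) h1
    simp only [Set.mem_preimage, Metric.mem_ball, Real.dist_eq, abs_lt] at hy ⊢
    constructor <;> linarith [hy.1, hy.2]
  have k2 : μ ((fun x : ℝ => (x + 1) / 10) ⁻¹' Metric.ball x (e/10)) = 0 := by
    refine measure_mono_null (fun y hy => ?_) h2
    simp only [Set.mem_preimage, Metric.mem_ball, Real.dist_eq, abs_lt] at hy ⊢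
    constructor <;> linarith [hy.1, hy.2]
  have k3 : μ ((fun x : ℝ => (x + t) / 10) ⁻¹' Metric.ball x (e/10)) = 0 := by
    refine measure_mono_null (fun y hy => ?_) h3
    simp only [Set.mem_preimage, Metric.mem_ball, Real.dist_eq, abs_lt] at hy ⊢
    constructor <;> linarith [hy.1, hy.2]
  rw [k1, k2, k3] at hpos
  simp at hpos

lemma mass_step {t : ℝ} (h0 : 0 ≤ t) (h1 : t ≤ 1) {μ : Measure ℝ} (hinv : muInv t μ)
    {R : ℝ} (hR : 1 ≤ R) : μ {x | R < |x|} ≤ μ {x | 9 * R < |x|} := by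
  have hs : MeasurableSet {x : ℝ | R < |x|} :=
    (isOpen_lt continuous_const continuous_abs).measurableSet
  rw [muInv_apply hinv hs]
  have key : ∀ d : ℝ, 0 ≤ d → d ≤ 1 →
      μ ((fun x : ℝ => (x + d) / 10) ⁻¹' {x : ℝ | R < |x|}) ≤ μ {x | 9 * R < |x|} := by
    intro d hd0 hd1
    refine measure_mono fun y hy => ?_
    simp only [Set.mem_preimage, Set.mem_ofPred_eq, lt_abs] at hy ⊢
    rcases hy with hy | hy
    · left; linarith
    · right; linarith
  have k1 := key 0 le_rfl zero_le_one
  simp only [add_zero] at k1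
  have k2 := key 1 zero_le_one le_rfl
  have k3 := key t h0 h1
  set M := μ {x | 9 * R < |x|}
  calc _ ≤ (3 : ℝ≥0∞)⁻¹ * (M + M + M) := by gcongr
    _ = (3 : ℝ≥0∞)⁻¹ * 3 * M := by ring
    _ = M := by rw [ENNReal.inv_mul_cancel (by norm_num) (by norm_num), one_mul]

lemma mass_zero {t : ℝ} (h0 : 0 ≤ t) (h1 : t ≤ 1) {μ : Measure ℝ} [IsProbabilityMeasure μ]
    (hinv : muInv t μ) : μ {x | 1 < |x|} = 0 := by
  have hb : ∀ n : ℕ, μ {x | 1 < |x|} ≤ μ {x : ℝ | (9:ℝ)^n < |x|} := by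
    intro n
    induction n with
    | zero => simp
    | succ n ih =>
      refine ih.trans ?_
      have := mass_step h0 h1 hinv (R := 9^n) (one_le_pow₀ (by norm_num))
      rwa [pow_succ, mul_comm]
  have hanti : Antitone fun n : ℕ => {x : ℝ | (9:ℝ)^n < |x|} := by
    intro a b hab x hx
    simp only [Set.mem_ofPred_eq] at hx ⊢
    exact lt_of_le_of_lt (pow_le_pow_right₀ (by norm_num) hab) hx
  have ht := tendsto_measure_iInter_atTop (μ := μ)
    (fun n => ((isOpen_lt continuous_const continuous_abs).measurableSet :
      MeasurableSet {x : ℝ | (9:ℝ)^n < |x|}).nullMeasurableSet) hanti ⟨0, measure_ne_top _ _⟩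
  have he : ⋂ n : ℕ, {x : ℝ | (9:ℝ)^n < |x|} = ∅ := by
    ext x
    simp only [Set.mem_iInter, Set.mem_ofPred_eq, Set.mem_empty_iff_false, iff_false, not_forall,
      not_lt]
    obtain ⟨n, hn⟩ := pow_unbounded_of_one_lt |x| (show (1:ℝ) < 9 by norm_num)
    exact ⟨n, hn.le⟩
  rw [he, measure_empty] at ht
  exact le_antisymm (ge_of_tendsto' ht hb) zero_le

lemma supp_bd {t : ℝ} (h0 : 0 ≤ t) (h1 : t ≤ 1) {μ : Measure ℝ} [IsProbabilityMeasure μ]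
    (hinv : muInv t μ) {x : ℝ} (hx : x ∈ msupport μ) : |x| ≤ 1 := by
  by_contra! h
  have := hx (|x| - 1) (by linarith)
  refine this.ne' (measure_mono_null (fun y hy => ?_) (mass_zero h0 h1 hinv))
  simp only [Metric.mem_ball, Real.dist_eq, Set.mem_ofPred_eq] at hy ⊢
  have := abs_sub_abs_le_abs_sub x y
  rw [abs_sub_comm] at this
  linarith

lemma supp_iter {t : ℝ} {μ : Measure ℝ} (hinv : muInv t μ) (L : ℕ) {x : ℝ}
    (hx : x ∈ msupport μ) : ∃ c ∈ CC t L, 10 ^ L * x - c ∈ msupport μ := by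
  induction L with
  | zero => exact ⟨0, by simp [CC], by simpa using hx⟩
  | succ L ih =>
    obtain ⟨c, hc, h⟩ := ih
    rcases supp_step hinv h with h | h | h
    · exact ⟨10 * c, (CC_succ _ _ _).2 ⟨c, hc, by simp⟩, by convert h using 1; ring⟩
    · exact ⟨10 * c + 1, (CC_succ _ _ _).2 ⟨c, hc, by simp⟩, by convert h using 1; ring⟩
    · exact ⟨10 * c + t, (CC_succ _ _ _).2 ⟨c, hc, by simp⟩, by convert h using 1; ring⟩

/-! ### exceptional sets -/

/-- the bad set at stage `k` -/
noncomputable def NN (t : ℝ) (k : ℕ) : Set ℝ :=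
  ⋃ p ∈ (BB (UU k) ×ˢ CC t (2 * UU k)) ×ˢ (Finset.Icc (-1 : ℤ) 1),
    Metric.closedBall (Int.fract ((p.1.1 : ℝ) * tp k + (1/10) ^ (2 * UU k) * p.1.2) + (p.2 : ℝ))
      (3 * (1/10) ^ (2 * UU k))

lemma NN_vol (t : ℝ) (k : ℕ) : volume (NN t k) ≤ ENNReal.ofReal ((1/2) ^ (k+2)) := by
  refine (measure_biUnion_finset_le _ _).trans ?_
  simp only [Real.volume_closedBall, Finset.sum_const, nsmul_eq_mul]
  rw [← ENNReal.ofReal_natCast, ← ENNReal.ofReal_mul (by positivity)]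
  refine ENNReal.ofReal_le_ofReal ?_
  set u := UU k with hu
  have hk : k + 3 ≤ u := UU_ge k
  have hc : (((BB u ×ˢ CC t (2 * u)) ×ˢ (Finset.Icc (-1 : ℤ) 1)).card : ℝ)
      ≤ 2 ^ u * 3 ^ (2*u) * 3 := by
    rw [Finset.card_product, Finset.card_product]
    have h1 := BB_card u
    have h2 := CC_card t (2*u)
    have h3 : (Finset.Icc (-1 : ℤ) 1).card = 3 := by decide
    rw [h3]
    exact_mod_cast Nat.mul_le_mul_right 3 (Nat.mul_le_mul h1 h2)
  calc _ ≤ (2 ^ u * 3 ^ (2*u) * 3) * (2 * (3 * (1/10 : ℝ) ^ (2 * u))) := by gcongr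
    _ = 18 * (9/50 : ℝ)^u := by
      rw [pow_mul, pow_mul, show (9/50:ℝ) = 2 * 3^2 * (1/10)^2 by norm_num, mul_pow, mul_pow]; ring
    _ ≤ 18 * (9/50 : ℝ)^(k+3) := by
      gcongr ?_ * ?_
      exact pow_le_pow_of_le_one (by norm_num) (by norm_num) hk
    _ ≤ (1/2 : ℝ)^(k+2) := by
      have : (9/50 : ℝ)^k ≤ (1/2)^k := pow_le_pow_left₀ (by norm_num) (by norm_num) k
      rw [pow_add, pow_add]
      have : (0:ℝ) < (1/2)^k := by positivity
      nlinarith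

lemma exists_gamma (t : ℝ) : ∃ γ : ℝ, 0 < γ ∧ γ < 1 ∧ ∀ k, γ ∉ NN t k := by
  by_contra! hcon
  have hsub : Set.Ioo (0:ℝ) 1 ⊆ ⋃ k, NN t k := by
    intro x hx
    obtain ⟨k, hk⟩ := hcon x hx.1 hx.2
    exact Set.mem_iUnion.2 ⟨k, hk⟩
  have h1 := (measure_mono (μ := volume) hsub).trans (measure_iUnion_le _)
  have hs : Summable fun k : ℕ => (1/2 : ℝ) ^ (k+2) :=
    (summable_nat_add_iff 2).2 summable_geometric_two
  have h2 : ∑' k, volume (NN t k) ≤ ENNReal.ofReal (∑' k : ℕ, (1/2 : ℝ) ^ (k+2)) := by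
    rw [ENNReal.ofReal_tsum_of_nonneg (fun k => by positivity) hs]
    exact ENNReal.tsum_le_tsum (NN_vol t)
  have h3 : ∑' k : ℕ, (1/2 : ℝ) ^ (k+2) = 1/2 := by
    simp_rw [pow_add]
    rw [tsum_mul_right, tsum_geometric_two]; norm_num
  rw [h3] at h2
  have h4 := h1.trans h2
  rw [Real.volume_Ioo, ENNReal.ofReal_le_ofReal_iff (by norm_num)] at h4
  norm_num at h4

lemma main_avoid (t : ℝ) (ht : t = ∑' n : ℕ, (1 : ℝ) / (tow (3 * (n + 1)) : ℝ))
    (μ : Measure ℝ) [IsProbabilityMeasure μ] (hinv : muInv t μ) (γ : ℝ) (g0 : 0 < γ) (g1 : γ < 1)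
    (k : ℕ) (hγ : γ ∉ NN t k) (n : ℕ) (hn : 1 ≤ n) (hnk : n + 2 * UU k ≤ UU (k+1))
    (x : ℝ) (hx : x ∈ msupport μ) (m : ℤ) :
    (1/10 : ℝ) ^ (2 * UU k) < |(10 : ℝ) ^ (n - 1) * x - γ - (m : ℝ)| := by
  by_contra! hle
  apply hγ
  obtain ⟨t0, t1⟩ := t_bd t ht
  obtain ⟨c0, hc0, hx'⟩ := supp_iter hinv (n-1) hx
  obtain ⟨z, a, ha, rfl⟩ := CC_form t _ c0 hc0
  obtain ⟨c, hc, hx''⟩ := supp_iter hinv (2 * UU k) hx'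
  have hb := supp_bd t0 t1 hinv hx''
  set y := (10:ℝ)^(n-1) * x with hy
  set P := 2 * UU k with hP
  set r := (1/10 : ℝ)^P with hr
  have hrp : 0 < r := by positivity
  have hr10 : r * 10 ^ P = 1 := by rw [hr, ← mul_pow]; norm_num
  have hrs : r ≤ (1/10)^2 := pow_le_pow_of_le_one (by norm_num) (by norm_num)
    (by have := UU_ge k; omega)
  -- approximations
  have e1 : |y - (z + a * t) - r * c| ≤ r := by
    have : y - (z + a * t) - r * c = r * (10 ^ P * (y - (z + a * t)) - c) := by
      rw [mul_sub, ← mul_assoc, hr10, one_mul]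
    rw [this, abs_mul, abs_of_pos hrp]
    nlinarith
  obtain ⟨s0, s1⟩ := split t ht k
  have e2 : |(a:ℝ) * t - a * tp k| ≤ r := by
    rw [← mul_sub, abs_of_nonneg (by positivity)]
    have ha1 : (a:ℝ) ≤ 10 ^ (n-1) := by exact_mod_cast (BB_lt _ a ha).le
    obtain ⟨d, hd⟩ := Nat.exists_eq_add_of_le hnk
    obtain ⟨n', rfl⟩ : ∃ n', n = n' + 1 := ⟨n - 1, by omega⟩
    simp only [Nat.add_sub_cancel] at ha1
    calc (a:ℝ) * (t - tp k) ≤ 10 ^ n' * (2 * (1/10:ℝ)^(UU (k+1))) := by gcongr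
      _ ≤ 10 ^ n' * (2 * (1/10:ℝ)^(n' + 1 + P)) := by
        gcongr ?_ * (2 * ?_)
        exact pow_le_pow_of_le_one (by norm_num) (by norm_num) hnk
      _ = (10 * (1/10) : ℝ)^n' * (2/10) * r := by rw [hr, mul_pow, pow_add, pow_add]; ring
      _ ≤ r := by norm_num; linarith
  obtain ⟨w, hw⟩ := tp_int k
  set a' := a % 10 ^ UU k with ha'
  obtain ⟨q, hq⟩ : ∃ q, q = a / 10 ^ UU k := ⟨_, rfl⟩
  have haa : (a:ℝ) * tp k = a' * tp k + (q : ℤ) * w := by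
    have : (a:ℝ) = 10 ^ UU k * (q : ℝ) + a' := by
      rw [hq]
      exact_mod_cast (Nat.div_add_mod a (10 ^ UU k)).symm
    rw [← hw]
    conv_lhs => rw [this]
    push_cast; ring
  set v := (a' : ℝ) * tp k + r * c with hv
  set j : ℤ := ⌊v⌋ + z + (q : ℤ) * w - m with hj
  have hfr : Int.fract v = v - ⌊v⌋ := rfl
  have e3 : |γ - (Int.fract v + j)| ≤ 3 * r := by
    have : γ - (Int.fract v + j) =
        -(y - γ - m) + (y - (z + a * t) - r * c) + ((a:ℝ) * t - a * tp k) := by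
      rw [hfr, hj, haa, hv]; push_cast; ring
    rw [this]
    refine (abs_add_three _ _ _).trans ?_
    rw [abs_neg]; linarith
  have f0 := Int.fract_nonneg v
  have f1 := Int.fract_lt_one v
  have e4 := abs_le.1 e3
  have j1 : (j:ℝ) < 2 := by norm_num at hrs; linarith [e4.1]
  have j0 : (-2:ℝ) < j := by norm_num at hrs; linarith [e4.2]
  have j1' : j < 2 := by exact_mod_cast j1
  have j0' : -2 < j := by exact_mod_cast j0
  simp only [NN, Set.mem_iUnion]
  refine ⟨((a', c), j), ?_, ?_⟩
  · simp only [Finset.mem_product, Finset.mem_Icc]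
    exact ⟨⟨BB_mod _ _ a ha, hc⟩, by omega, by omega⟩
  · rw [Metric.mem_closedBall, Real.dist_eq]
    exact e3

/-! ### the sequence ψ -/

lemma kap_ex (n : ℕ) : ∃ k, n + 2 * UU k ≤ UU (k+1) := by
  refine ⟨n, le_trans ?_ (UU_succ n)⟩
  have h1 := UU_ge n
  have h2 : UU n ^ 2 < 10 ^ (UU n ^ 2) := Nat.lt_pow_self (by norm_num)
  have : n ≤ 10 ^ (UU n ^ 2) := by nlinarith
  omega

open Classical in
noncomputable def kap (n : ℕ) : ℕ := Nat.find (kap_ex n)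

lemma kap_spec (n : ℕ) : n + 2 * UU (kap n) ≤ UU (kap n + 1) := by
  classical exact Nat.find_spec (kap_ex n)

lemma kap_le {n k : ℕ} (h : n + 2 * UU k ≤ UU (k+1)) : kap n ≤ k := by
  classical exact Nat.find_min' (kap_ex n) h

lemma kap_mono : Monotone kap := by
  intro a b h
  exact kap_le (by have := kap_spec b; omega)

noncomputable def psi (n : ℕ) : ℝ := (1/10) ^ (2 * UU (kap n))

lemma psi_pos (n : ℕ) : 0 < psi n := by unfold psi; positivity

lemma psi_anti : Antitone psi := by
  intro a b h
  refine pow_le_pow_of_le_one (by norm_num) (by norm_num) ?_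
  have := UU_strictMono.monotone (kap_mono h)
  omega

lemma psi_le_one (n : ℕ) : psi n ≤ 1 := pow_le_one₀ (by norm_num) (by norm_num)

noncomputable def Psi (N : ℕ) : ℝ := ∑ n ∈ Finset.Icc 1 N, psi n

lemma Psi_le (N : ℕ) : Psi N ≤ N := by
  have := Finset.sum_le_card_nsmul (Finset.Icc 1 N) psi 1 (fun n _ => psi_le_one n)
  simpa [Psi] using this

lemma Psi_ge (N : ℕ) : N * psi N ≤ Psi N := by
  have := Finset.card_nsmul_le_sum (Finset.Icc 1 N) psi (psi N)
    (fun n hn => psi_anti (Finset.mem_Icc.1 hn).2)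
  simpa [Psi] using this

lemma Psi_pos {N : ℕ} (hN : 1 ≤ N) : 0 < Psi N :=
  lt_of_lt_of_le (mul_pos (by exact_mod_cast hN) (psi_pos N)) (Psi_ge N)

lemma Psi_mono : Monotone Psi := by
  intro a b h
  exact Finset.sum_le_sum_of_subset_of_nonneg (Finset.Icc_subset_Icc_right h)
    (fun i _ _ => (psi_pos i).le)

/-- along `N_k = 10^(U_k^2)` -/
lemma Psi_key (k : ℕ) : (10:ℝ) ^ (UU k ^ 2) * (1/10) ^ (2 * UU k) ≤ Psi (10 ^ (UU k ^ 2)) := by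
  refine le_trans ?_ (Psi_ge _)
  push_cast
  gcongr
  refine pow_le_pow_of_le_one (by norm_num) (by norm_num) ?_
  have := UU_strictMono.monotone (kap_le (UU_succ k))
  omega

lemma Psi_tendsto : Tendsto Psi atTop atTop := by
  refine tendsto_atTop_atTop_of_monotone Psi_mono fun b => ?_
  obtain ⟨k, hk⟩ := exists_nat_ge b
  refine ⟨_, le_trans ?_ (Psi_key k)⟩
  have h3 := UU_ge k
  obtain ⟨d, hd⟩ : ∃ d, UU k ^ 2 = 2 * UU k + k + d := Nat.exists_eq_add_of_le (by nlinarith)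
  rw [hd, pow_add, pow_add]
  have h1 : (10:ℝ) ^ (2 * UU k) * (1/10) ^ (2 * UU k) = 1 := by rw [← mul_pow]; norm_num
  have h2 : (k:ℝ) ≤ 10 ^ k := by exact_mod_cast (Nat.lt_pow_self (by norm_num : 1 < 10)).le
  have h4 : (1:ℝ) ≤ 10 ^ d := one_le_pow₀ (by norm_num)
  calc b ≤ 10 ^ k := hk.trans h2
    _ ≤ 10 ^ k * 10 ^ d := le_mul_of_one_le_right (by positivity) h4
    _ = 10 ^ k * 10 ^ d * (10 ^ (2 * UU k) * (1/10) ^ (2 * UU k)) := by rw [h1, mul_one]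
    _ = _ := by ring

lemma ratio_le {N : ℕ} (hN : 2 ≤ N) : Real.log (Psi N) / Real.log N ≤ 1 := by
  have h : (1:ℝ) < N := by exact_mod_cast hN
  rw [div_le_one (Real.log_pos h)]
  exact Real.log_le_log (Psi_pos (by omega)) (Psi_le N)

lemma ratio_ge (k : ℕ) : 1 - 2 / (UU k : ℝ) ≤
    Real.log (Psi (10 ^ (UU k ^ 2))) / Real.log ((10 ^ (UU k ^ 2) : ℕ) : ℝ) := by
  have h3 : (0:ℝ) < UU k := by exact_mod_cast (by have := UU_ge k; omega : 0 < UU k)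
  have hl : 0 < Real.log 10 := Real.log_pos (by norm_num)
  have h := Real.log_le_log (by positivity) (Psi_key k)
  rw [Real.log_mul (by positivity) (by positivity), Real.log_pow, Real.log_pow, one_div,
    Real.log_inv] at h
  push_cast at h ⊢
  rw [Real.log_pow, le_div_iff₀ (by push_cast; positivity)]
  refine le_trans (le_of_eq ?_) h
  push_cast
  field_simp
  ring

lemma freq_ge {c : ℝ} (hc : c < 1) :
    ∃ᶠ N : ℕ in atTop, c ≤ Real.log (Psi N) / Real.log (N : ℝ) := by
  rw [frequently_atTop]
  intro M
  obtain ⟨k0, hk0⟩ := exists_nat_gt (2 / (1 - c))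
  set k := max k0 M
  have h3 := UU_ge k
  have hkM : M ≤ k := le_max_right _ _
  have hkk : k0 ≤ k := le_max_left _ _
  refine ⟨10 ^ (UU k ^ 2), ?_, le_trans ?_ (ratio_ge k)⟩
  · have h2 : UU k ^ 2 < 10 ^ (UU k ^ 2) := Nat.lt_pow_self (by norm_num)
    have : M ≤ UU k ^ 2 := by nlinarith
    exact this.trans h2.le
  · have hU : (k0:ℝ) ≤ UU k := by exact_mod_cast (by omega : k0 ≤ UU k)
    have hp : (0:ℝ) < UU k := by exact_mod_cast (by omega : 0 < UU k)
    have h1c : 0 < 1 - c := by linarith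
    have : 2 / (UU k : ℝ) ≤ 1 - c := by
      rw [div_le_iff₀ hp]
      rw [div_lt_iff₀ h1c] at hk0
      nlinarith
    linarith

lemma limsup_eq : Filter.limsup
    (fun N : ℕ => Real.log (Psi N) / Real.log (N : ℝ)) atTop = 1 := by
  have hev : ∀ᶠ N : ℕ in atTop, Real.log (Psi N) / Real.log (N : ℝ) ≤ 1 := by
    filter_upwards [eventually_ge_atTop 2] with N hN using ratio_le hN
  have hbd : IsBoundedUnder (· ≤ ·) atTop
      (fun N : ℕ => Real.log (Psi N) / Real.log (N : ℝ)) := ⟨1, by simpa using hev⟩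
  apply le_antisymm
  · exact limsup_le_of_le (IsCoboundedUnder.of_frequently_ge (freq_ge zero_lt_one)) hev
  · refine le_of_forall_lt fun c hc => ?_
    obtain ⟨d, hd, hd1⟩ := exists_between hc
    exact hd.trans_le (le_limsup_of_frequently_le (freq_ge hd1) hbd)

/-- For `t = Σ 1/(10↑↑(3n))` and `X_t` the support of `μ_t`, there exist a monotonically
decreasing sequence `ψ(1), ψ(2), …` of positive reals and `γ ∈ (0,1)` with
`limsup_N log Ψ(N)/log N = 1` (and `Ψ(N) → ∞`), such that for all `x ∈ X_t`, all `n ≥ 1`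
and all integers `m`, `|10^{n-1} x − γ − m| > ψ(n)`. -/
theorem stmt2 (t : ℝ) (ht : t = ∑' n : ℕ, (1 : ℝ) / (tow (3 * (n + 1)) : ℝ))
    (μ : Measure ℝ) (hprob : IsProbabilityMeasure μ) (hinv : muInv t μ) :
    ∃ (ψ : ℕ → ℝ) (γ : ℝ),
      (∀ n : ℕ, 1 ≤ n → 0 < ψ n) ∧
      (∀ n : ℕ, 1 ≤ n → ψ (n + 1) ≤ ψ n) ∧
      0 < γ ∧ γ < 1 ∧
      Tendsto (fun N : ℕ => ∑ n ∈ Finset.Icc 1 N, ψ n) atTop atTop ∧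
      Filter.limsup
        (fun N : ℕ => Real.log (∑ n ∈ Finset.Icc 1 N, ψ n) / Real.log (N : ℝ)) atTop = 1 ∧
      (∀ x ∈ msupport μ, ∀ n : ℕ, 1 ≤ n → ∀ m : ℤ,
        ψ n < |(10 : ℝ) ^ (n - 1) * x - γ - (m : ℝ)|) := by
  obtain ⟨γ, g0, g1, hγ⟩ := exists_gamma t
  exact ⟨psi, γ, fun n _ => psi_pos n, fun n _ => psi_anti (Nat.le_succ n), g0, g1, Psi_tendsto,
    limsup_eq, fun x hx n hn m =>
      main_avoid t ht μ hinv γ g0 g1 (kap n) (hγ _) n hn (kap_spec n) x hx m⟩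
end

section
/- Let μ be a self-similar measure on [0,1] (so μ = Σ_a p_a (T_a)_* μ for finitely many contracting similarities T_a : [0,1] → [0,1] and a probability vector with positive entries, μ non-atomic). Let f : [0,1] → ℝ be a C² map and let Z = {x ∈ [0,1] : f''(x) = 0}. If μ(Z) = 0, then the pushforward measure f_* μ is Rajchman. -/
open MeasureTheory Filter Set
open scoped ENNReal NNReal

/-- The Fourier transform of a measure on `ℝ`: `μ̂(ξ) = ∫ e^{2πiξx} dμ(x)`. -/
noncomputable def ft (μ : Measure ℝ) (ξ : ℝ) : ℂ :=
  ∫ x, Complex.exp (((2 * Real.pi * ξ * x : ℝ) : ℂ) * Complex.I) ∂μ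

/-- A measure is Rajchman if its Fourier transform tends to `0` as `|ξ| → ∞`. -/
def Rajchman (μ : Measure ℝ) : Prop :=
  Tendsto (ft μ) (cocompact ℝ) (nhds 0)

/-- Bundled hypotheses on a self-similar measure. -/
structure Sys {ι : Type} [Fintype ι] (r c p : ι → ℝ) (lo hi : ℝ) (μ : Measure ℝ) : Prop where
  lo_pos : 0 < lo
  lo_le : ∀ a, lo ≤ |r a|
  le_hi : ∀ a, |r a| ≤ hi
  lo_hi : lo ≤ hi
  hi_lt : hi < 1
  maps : ∀ a, MapsTo (fun x : ℝ => r a * x + c a) (Icc 0 1) (Icc 0 1)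
  p_pos : ∀ a, 0 < p a
  p_sum : ∑ a, p a = 1
  prob : IsProbabilityMeasure μ
  na : ∀ x : ℝ, μ {x} = 0
  supp : μ (Icc (0 : ℝ) 1) = 1
  inv : μ = ∑ a, ENNReal.ofReal (p a) • Measure.map (fun x : ℝ => r a * x + c a) μ

/-- Admissible compositions at scale `δ`. -/
def Adm {ι : Type} [Fintype ι] (r : ι → ℝ) (lo δ : ℝ) (k : ℕ) (ρ t : ℝ) : Prop :=
  lo * δ ≤ |ρ| ∧ |ρ| ≤ δ ∧ MapsTo (fun x : ℝ => ρ * x + t) (Icc 0 1) (Icc 0 1) ∧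
    ∃ n : ι → ℕ, (∀ a, n a ≤ k) ∧ ρ = ∏ a, r a ^ n a

section
variable {ι : Type} [Fintype ι] {r c p : ι → ℝ} {lo hi : ℝ} {μ : Measure ℝ}

lemma aff_emb (ρ t : ℝ) (h : ρ ≠ 0) : MeasurableEmbedding (fun x : ℝ => ρ * x + t) := by
  have := ((Homeomorph.mulLeft₀ ρ h).trans (Homeomorph.addRight t)).measurableEmbedding
  exact this

lemma Sys.r_ne (S : Sys r c p lo hi μ) (a : ι) : r a ≠ 0 := by
  have := S.lo_le a; have := S.lo_pos
  exact abs_pos.1 (by linarith)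

lemma Sys.map_le (S : Sys r c p lo hi μ) (a : ι) :
    ENNReal.ofReal (p a) • Measure.map (fun x : ℝ => r a * x + c a) μ ≤ μ := by
  conv_rhs => rw [S.inv]
  exact Finset.single_le_sum (f := fun a => ENNReal.ofReal (p a) • Measure.map (fun x : ℝ => r a * x + c a) μ)
    (fun _ _ => Measure.zero_le _) (Finset.mem_univ a)

lemma Sys.integrable_comp {E : Type} [NormedAddCommGroup E] (S : Sys r c p lo hi μ) (a : ι) {u : ℝ → E}
    (hu : Integrable u μ) : Integrable (fun x => u (r a * x + c a)) μ := by
  have h1 := hu.mono_measure (S.map_le a)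
  rw [integrable_smul_measure (by simpa using S.p_pos a) (by simp)] at h1
  exact ((aff_emb (r a) (c a) (S.r_ne a)).integrable_map_iff).1 h1

lemma Sys.integral_eq {E : Type} [NormedAddCommGroup E] [NormedSpace ℝ E]
    (S : Sys r c p lo hi μ) {u : ℝ → E}
    (hu : Integrable u μ) : ∫ x, u x ∂μ = ∑ a, p a • ∫ x, u (r a * x + c a) ∂μ := by
  conv_lhs => rw [S.inv]
  rw [integral_finsetSum_measure]
  · refine Finset.sum_congr rfl fun a _ => ?_
    rw [integral_smul_measure, (aff_emb (r a) (c a) (S.r_ne a)).integral_map,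
      ENNReal.toReal_ofReal (S.p_pos a).le]
  · intro a _
    exact hu.mono_measure (S.map_le a)

lemma Sys.restr (S : Sys r c p lo hi μ) : μ.restrict (Icc (0:ℝ) 1) = μ := by
  have := S.prob
  rw [Measure.restrict_eq_self_of_ae_mem]
  exact (prob_compl_eq_zero_iff measurableSet_Icc).2 S.supp

lemma Sys.ae_mem (S : Sys r c p lo hi μ) : ∀ᵐ x ∂μ, x ∈ Icc (0:ℝ) 1 := by
  have := S.prob
  exact (prob_compl_eq_zero_iff measurableSet_Icc).2 S.supp

lemma Sys.integrable {E : Type} [NormedAddCommGroup E] 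
    (S : Sys r c p lo hi μ) {u : ℝ → E} (hu : ContinuousOn u (Icc 0 1)) : Integrable u μ := by
  have := S.prob
  have h := hu.integrableOn_compact (μ := μ) isCompact_Icc
  rwa [IntegrableOn, S.restr] at h

lemma Sys.mono (S : Sys r c p lo hi μ) {u v : ℝ → ℝ} (hu : ContinuousOn u (Icc 0 1))
    (hv : ContinuousOn v (Icc 0 1)) (h : ∀ x ∈ Icc (0:ℝ) 1, u x ≤ v x) :
    ∫ x, u x ∂μ ≤ ∫ x, v x ∂μ :=
  integral_mono_ae (S.integrable hu) (S.integrable hv) (S.ae_mem.mono h)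

lemma adm_id (S : Sys r c p lo hi μ) (k : ℕ) : Adm r lo 1 k 1 0 := by
  refine ⟨?_, by simp, ?_, fun _ => 0, by simp, by simp⟩
  · have := S.lo_hi; have := S.hi_lt; simp; linarith
  · intro x hx; simpa using hx

lemma Sys.localize (S : Sys r c p lo hi μ) {E : Type} [NormedAddCommGroup E] [NormedSpace ℝ E] (k : ℕ) :
    ∀ (δ : ℝ), hi ^ k ≤ δ → δ ≤ 1 → ∀ (u : ℝ → E) (A : ℝ → ℝ), Integrable u μ → Integrable A μ →
    (∀ ρ t, Adm r lo δ k ρ t → ‖∫ x, u (ρ * x + t) ∂μ‖ ≤ ∫ x, A (ρ * x + t) ∂μ) →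
    ‖∫ x, u x ∂μ‖ ≤ ∫ x, A x ∂μ := by
  classical
  induction k with
  | zero =>
    intro δ h1 h2 u A hu hA h
    obtain rfl : δ = 1 := le_antisymm h2 (by simpa using h1)
    simpa using h 1 0 (adm_id S 0)
  | succ k ih =>
    intro δ h1 h2 u A hu hA h
    rcases h2.eq_or_lt with rfl | h2
    · simpa using h 1 0 (adm_id S _)
    have hlo := S.lo_pos
    have hhi : 0 < hi := hlo.trans_le S.lo_hi
    have hδ : 0 < δ := lt_of_lt_of_le (by positivity) h1
    rw [S.integral_eq hu, S.integral_eq hA]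
    refine (norm_sum_le _ _).trans (Finset.sum_le_sum fun a _ => ?_)
    rw [norm_smul, smul_eq_mul, Real.norm_of_nonneg (S.p_pos a).le]
    refine mul_le_mul_of_nonneg_left ?_ (S.p_pos a).le
    have hra : 0 < |r a| := abs_pos.2 (S.r_ne a)
    by_cases hc : |r a| ≤ δ
    · refine h (r a) (c a) ⟨?_, hc, S.maps a, Pi.single a 1, ?_, ?_⟩
      · have := S.lo_le a
        nlinarith
      · intro b
        by_cases hb : b = a
        · subst hb; simp
        · simp [hb]
      · rw [Finset.prod_eq_single a]
        · simp
        · intro b _ hb; simp [hb]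
        · simp
    · push Not at hc
      refine ih (δ / |r a|) ?_ ?_ _ _ (S.integrable_comp a hu) (S.integrable_comp a hA) ?_
      · rw [le_div_iff₀ hra]
        calc hi ^ k * |r a| ≤ hi ^ k * hi := by gcongr; exact S.le_hi a
          _ ≤ δ := by rw [← pow_succ]; exact h1
      · rw [div_le_one hra]; exact hc.le
      · rintro ρ t ⟨g1, g2, g3, n, g4, g5⟩
        have := h (r a * ρ) (r a * t + c a) ⟨?_, ?_, ?_, n + Pi.single a 1, ?_, ?_⟩
        · have e : ∀ x, r a * (ρ * x + t) + c a = r a * ρ * x + (r a * t + c a) := fun x => by ring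
          simp only [e]
          exact this
        · rw [abs_mul]
          rw [mul_div_assoc', div_le_iff₀ hra] at g1
          linarith
        · rw [abs_mul]
          rw [le_div_iff₀ hra] at g2
          linarith
        · intro x hx
          have := S.maps a (g3 hx)
          convert this using 1
          simp only; ring
        · intro b
          have := g4 b
          by_cases hb : b = a
          · subst hb; simpa using this
          · simp [hb]; omega
        · simp only [Pi.add_apply, pow_add, Finset.prod_mul_distrib]
          rw [← g5, mul_comm]
          congr 1
          rw [Finset.prod_eq_single a]
          · simp
          · intro b _ hb; simp [hb]
          · simp

lemma Sys.small (S : Sys r c p lo hi μ) : ∃ t > 0, ∀ B : Set ℝ, B ⊆ Icc 0 1 →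
    (∀ x ∈ B, ∀ y ∈ B, |x - y| ≤ t) → μ B ≤ 1 / 2 := by
  have := S.prob
  have key : ∀ x : ℝ, ∃ t > 0, μ (Metric.ball x t) ≤ 1/2 := by
    intro x
    have h : Tendsto (fun t : ℝ => μ (Metric.closedBall x t)) (nhdsWithin 0 (Ioi 0)) (nhds (μ {x})) := by
      have := tendsto_measure_cthickening_of_isClosed (μ := μ) (s := {x}) ⟨1, by norm_num, by simp⟩ isClosed_singleton
      refine (this.mono_left nhdsWithin_le_nhds).congr' ?_
      filter_upwards [self_mem_nhdsWithin] with t ht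
      rw [Metric.cthickening_singleton _ (le_of_lt ht)]
    rw [S.na x] at h
    have h2 := (h.eventually (gt_mem_nhds (show (0:ℝ≥0∞) < 1/2 by simp))).and self_mem_nhdsWithin
    obtain ⟨t, ht1, ht2⟩ := h2.exists
    exact ⟨t, ht2, (measure_mono Metric.ball_subset_closedBall).trans ht1.le⟩
  choose T hT hT2 using key
  obtain ⟨δ, hδ, h⟩ := lebesgue_number_lemma_of_metric (s := Icc (0:ℝ) 1) (c := fun x : ℝ => Metric.ball x (T x))
    isCompact_Icc (fun _ => Metric.isOpen_ball) (fun x _ => mem_iUnion.2 ⟨x, Metric.mem_ball_self (hT x)⟩)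
  refine ⟨δ/2, by positivity, fun B hB hd => ?_⟩
  rcases B.eq_empty_or_nonempty with rfl | ⟨x, hx⟩
  · simp
  obtain ⟨i, hi⟩ := h x (hB hx)
  refine (measure_mono ?_).trans (hT2 i)
  refine subset_trans ?_ hi
  intro y hy
  rw [Metric.mem_ball, Real.dist_eq]
  linarith [hd y hy x hx]
/-- The phase `e^{ix}`. -/
noncomputable def EE (x : ℝ) : ℂ := Complex.exp ((x : ℂ) * Complex.I)

lemma EE_norm (x : ℝ) : ‖EE x‖ = 1 := Complex.norm_exp_ofReal_mul_I x

lemma EE_add (x y : ℝ) : EE (x + y) = EE x * EE y := by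
  simp [EE, add_mul, Complex.exp_add]

lemma EE_cont : Continuous EE := by
  unfold EE; fun_prop

lemma EE_lip (x y : ℝ) : ‖EE x - EE y‖ ≤ |x - y| := by
  have h : EE x - EE y = EE y * (EE (x - y) - 1) := by
    rw [mul_sub, ← EE_add]; simp
  rw [h, norm_mul, EE_norm, one_mul]
  have := Real.norm_exp_I_mul_ofReal_sub_one_le (x := x - y)
  rw [EE, mul_comm]
  simpa using this

lemma EE_pair (x y : ℝ) : ‖EE x + EE y‖ ≤ 2 - Real.sin ((x - y) / 2) ^ 2 := by
  have h : EE x + EE y = EE ((x + y) / 2) * ((2 * Real.cos ((x - y) / 2) : ℝ) : ℂ) := by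
    have h1 : x = (x + y) / 2 + (x - y) / 2 := by ring
    have h2 : y = (x + y) / 2 + (-((x - y) / 2)) := by ring
    have : EE ((x-y)/2) + EE (-((x-y)/2)) = ((2 * Real.cos ((x - y) / 2) : ℝ) : ℂ) := by
      unfold EE
      push_cast
      rw [Complex.cos]
      ring_nf
    rw [← this, mul_add, ← EE_add, ← EE_add, ← h1, ← h2]
  rw [h, norm_mul, EE_norm, one_mul, Complex.norm_real, Real.norm_eq_abs, abs_mul]
  have h3 := Real.sin_sq_add_cos_sq ((x - y)/2)
  have h4 := sq_abs (Real.cos ((x-y)/2))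
  rw [abs_of_pos (by norm_num : (0:ℝ) < 2)]
  nlinarith [sq_nonneg (|Real.cos ((x-y)/2)| - 1)]

/-- Majorants of `|μ̂|`. -/
noncomputable def HH (r p : ι → ℝ) (a0 : ι) (d : ℝ) : ℕ → ℝ → ℝ
  | 0, _ => 1
  | N + 1, η => by
      classical
      exact ∑ a, p a * (if a = a0 then 1 - Real.sin (d * η / 2) ^ 2 / 2 else 1) * HH r p a0 d N (r a * η)

open Classical in
lemma HH_succ (r p : ι → ℝ) (a0 : ι) (d : ℝ) (N : ℕ) (η : ℝ) : HH r p a0 d (N+1) η =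
    ∑ a, p a * (if a = a0 then 1 - Real.sin (d * η / 2) ^ 2 / 2 else 1) * HH r p a0 d N (r a * η) := rfl

lemma phi_ge (x : ℝ) : 1 / 2 ≤ 1 - Real.sin x ^ 2 / 2 := by
  have := Real.sin_sq_le_one x; linarith

lemma HH_nonneg (S : Sys r c p lo hi μ) (a0 : ι) (d : ℝ) (N : ℕ) : ∀ η, 0 ≤ HH r p a0 d N η := by
  classical
  induction N with
  | zero => intro η; simp [HH]
  | succ N ih =>
    intro η
    rw [HH_succ]
    refine Finset.sum_nonneg fun a _ => mul_nonneg (mul_nonneg (S.p_pos a).le ?_) (ih _)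
    split_ifs
    · linarith [phi_ge (d * η / 2)]
    · norm_num

lemma HH_cont (r p : ι → ℝ) (a0 : ι) (d : ℝ) (N : ℕ) : Continuous (HH r p a0 d N) := by
  classical
  induction N with
  | zero => exact continuous_const
  | succ N ih =>
    have : HH r p a0 d (N+1) = fun η => 
      ∑ a, p a * (if a = a0 then 1 - Real.sin (d * η / 2) ^ 2 / 2 else 1) * HH r p a0 d N (r a * η) := by
      ext η; rw [HH_succ]
    rw [this]
    refine continuous_finsetSum _ fun a _ => ?_
    split_ifs <;> fun_prop

lemma phi_lip (d η η' : ℝ) : 1 - Real.sin (d * η / 2) ^ 2 / 2 ≤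
    Real.exp (|d| * |η - η'|) * (1 - Real.sin (d * η' / 2) ^ 2 / 2) := by
  set x := d * η / 2
  set y := d * η' / 2
  have h1 : |Real.sin x - Real.sin y| ≤ |x - y| := by
    have := Real.lipschitzWith_sin.dist_le_mul x y
    simpa [Real.dist_eq] using this
  have h2 : x - y = d * (η - η') / 2 := by simp only [x, y]; ring
  have h3 : |x - y| = |d| * |η - η'| / 2 := by rw [h2, abs_div, abs_mul]; simp
  have h4 : |Real.sin y ^ 2 - Real.sin x ^ 2| ≤ 2 * |x - y| := by
    have : Real.sin y ^ 2 - Real.sin x ^ 2 = -((Real.sin x - Real.sin y) * (Real.sin x + Real.sin y)) := by ring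
    rw [this, abs_neg, abs_mul]
    have h5 : |Real.sin x + Real.sin y| ≤ 2 :=
      (abs_add_le _ _).trans (by linarith [Real.abs_sin_le_one x, Real.abs_sin_le_one y])
    nlinarith [abs_nonneg (Real.sin x - Real.sin y), abs_nonneg (Real.sin x + Real.sin y), abs_nonneg (x-y)]
  have h6 := phi_ge y
  have h7 := Real.add_one_le_exp (|d| * |η - η'|)
  have h8 := le_abs_self (Real.sin y ^ 2 - Real.sin x ^ 2)
  have h9 : 0 ≤ |d| * |η - η'| := by positivity
  nlinarith

lemma HH_good (S : Sys r c p lo hi μ) (a0 : ι) (d : ℝ) (N : ℕ) : ∀ η η', HH r p a0 d N η ≤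
    Real.exp (|d| / (1 - hi) * |η - η'|) * HH r p a0 d N η' := by
  classical
  have hh : 0 < 1 - hi := by linarith [S.hi_lt]
  induction N with
  | zero =>
    intro η η'
    simp only [HH, mul_one]
    exact Real.one_le_exp (by positivity)
  | succ N ih =>
    intro η η'
    rw [HH_succ, HH_succ, Finset.mul_sum]
    refine Finset.sum_le_sum fun a _ => ?_
    have e : Real.exp (|d| / (1 - hi) * |η - η'|) = Real.exp (|d| * |η - η'|) *
        Real.exp (|d| / (1 - hi) * (hi * |η - η'|)) := by
      rw [← Real.exp_add]; congr 1; field_simp; ring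
    have h1 : HH r p a0 d N (r a * η) ≤ Real.exp (|d| / (1 - hi) * (hi * |η - η'|)) * HH r p a0 d N (r a * η') := by
      refine (ih _ (r a * η')).trans ?_
      refine mul_le_mul_of_nonneg_right (Real.exp_le_exp.2 ?_) (HH_nonneg S _ _ _ _)
      rw [← mul_sub, abs_mul]
      have := S.le_hi a
      gcongr
    have h2 : (if a = a0 then 1 - Real.sin (d * η / 2) ^ 2 / 2 else 1) ≤ Real.exp (|d| * |η - η'|) *
      (if a = a0 then 1 - Real.sin (d * η' / 2) ^ 2 / 2 else 1) := by
      split_ifs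
      · exact phi_lip d η η'
      · rw [mul_one]; exact Real.one_le_exp (by positivity)
    have h3 : 0 ≤ (if a = a0 then 1 - Real.sin (d * η' / 2) ^ 2 / 2 else 1) := by
      split_ifs
      · linarith [phi_ge (d * η' / 2)]
      · norm_num
    calc _ = p a * ((if a = a0 then 1 - Real.sin (d * η / 2) ^ 2 / 2 else 1) * HH r p a0 d N (r a * η)) := by ring
      _ ≤ p a * ((Real.exp (|d| * |η - η'|) * (if a = a0 then 1 - Real.sin (d * η' / 2) ^ 2 / 2 else 1)) *
          (Real.exp (|d| / (1 - hi) * (hi * |η - η'|)) * HH r p a0 d N (r a * η'))) := by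
          refine mul_le_mul_of_nonneg_left ?_ (S.p_pos a).le
          exact mul_le_mul h2 h1 (HH_nonneg S _ _ _ _) (by positivity)
      _ = _ := by rw [e]; ring

lemma mu_le_HH (S : Sys r c p lo hi μ) (a0 b0 : ι) (hab : a0 ≠ b0) (hr : r a0 = r b0) (hp : p a0 = p b0)
    (N : ℕ) : ∀ η, ‖∫ x, EE (η * x) ∂μ‖ ≤ HH r p a0 (c a0 - c b0) N η := by
  classical
  have := S.prob
  induction N with
  | zero =>
    intro η
    refine (norm_integral_le_integral_norm _).trans ?_
    simp [EE_norm, HH]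
  | succ N ih =>
    intro η
    have hc : Continuous fun x => EE (η * x) := EE_cont.comp (by fun_prop)
    rw [S.integral_eq (S.integrable hc.continuousOn)]
    have e : ∀ a, ∫ x, EE (η * (r a * x + c a)) ∂μ = EE (η * c a) * ∫ x, EE (r a * η * x) ∂μ := by
      intro a
      rw [← integral_const_mul]
      congr 1; ext x
      rw [← EE_add]; congr 1; ring
    simp only [e]
    rw [HH_succ]
    have hb : b0 ∈ (Finset.univ.erase a0) := by simp [hab.symm]
    rw [← Finset.add_sum_erase _ _ (Finset.mem_univ a0), ← Finset.add_sum_erase _ _ hb,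
      ← Finset.add_sum_erase Finset.univ _ (Finset.mem_univ a0), ← Finset.add_sum_erase (Finset.univ.erase a0) _ hb,
      ← add_assoc, ← add_assoc]
    refine (norm_add_le _ _).trans (add_le_add ?_ ?_)
    · have e2 : p a0 • (EE (η * c a0) * ∫ x, EE (r a0 * η * x) ∂μ) + p b0 • (EE (η * c b0) * ∫ x, EE (r b0 * η * x) ∂μ)
        = p a0 • ((EE (η * c a0) + EE (η * c b0)) * ∫ x, EE (r a0 * η * x) ∂μ) := by
        rw [← hr, ← hp, ← smul_add]; congr 1; ring
      rw [e2, norm_smul, norm_mul, Real.norm_of_nonneg (S.p_pos a0).le]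
      rw [if_pos rfl, if_neg hab.symm, ← hr, ← hp]
      have h1 := EE_pair (η * c a0) (η * c b0)
      have h2 : (η * c a0 - η * c b0) / 2 = (c a0 - c b0) * η / 2 := by ring
      rw [h2] at h1
      calc _ ≤ p a0 * ((2 - Real.sin ((c a0 - c b0) * η / 2) ^ 2) * HH r p a0 (c a0 - c b0) N (r a0 * η)) := by
            refine mul_le_mul_of_nonneg_left ?_ (S.p_pos a0).le
            refine mul_le_mul h1 (ih _) (norm_nonneg _) ?_
            linarith [phi_ge ((c a0 - c b0) * η / 2)]
        _ ≤ _ := by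
            have h3 := mul_nonneg (S.p_pos a0).le (HH_nonneg S a0 (c a0 - c b0) N (r a0 * η))
            nlinarith [mul_nonneg h3 (sq_nonneg (Real.sin ((c a0 - c b0) * η / 2)))]
    · refine (norm_sum_le _ _).trans (Finset.sum_le_sum fun a ha => ?_)
      have ha0 : a ≠ a0 := by simp at ha; tauto
      rw [norm_smul, norm_mul, EE_norm, Real.norm_of_nonneg (S.p_pos a).le, if_neg ha0, one_mul, mul_one]
      exact mul_le_mul_of_nonneg_left (ih _) (S.p_pos a).le
/-- Bi-Lipschitz maps on `[0,1]`. -/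
def BiLip (s L : ℝ) (g : ℝ → ℝ) : Prop :=
  ∀ x ∈ Icc (0:ℝ) 1, ∀ y ∈ Icc (0:ℝ) 1, s * |x - y| ≤ |g x - g y| ∧ |g x - g y| ≤ L * |x - y|

lemma BiLip.cont {s L : ℝ} {g : ℝ → ℝ} (hL : 0 < L) (hg : BiLip s L g) : ContinuousOn g (Icc 0 1) := by
  have : LipschitzOnWith (Real.toNNReal L) g (Icc 0 1) := by
    refine LipschitzOnWith.of_dist_le_mul fun x hx y hy => ?_
    rw [Real.dist_eq, Real.dist_eq, Real.coe_toNNReal _ hL.le]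
    exact (hg x hx y hy).2
  exact this.continuousOn

lemma comp_aff_cont {E : Type} [TopologicalSpace E] {g : ℝ → E} (hg : ContinuousOn g (Icc 0 1)) {ρ t : ℝ}
    (hm : MapsTo (fun x : ℝ => ρ * x + t) (Icc 0 1) (Icc 0 1)) :
    ContinuousOn (fun x => g (ρ * x + t)) (Icc 0 1) :=
  hg.comp (f := fun x : ℝ => ρ * x + t) (by fun_prop) hm

lemma gap0 (S : Sys r c p lo hi μ) (d s L : ℝ) (hd : d ≠ 0) (hs : 0 < s) (hL : 0 < L) :
    ∃ κ > 0, ∀ g, BiLip s L g → ∀ l : ℝ, 1 / (|d| * L) ≤ |l| → ∀ ρ t : ℝ,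
      lo * (1 / (|d| * L) / |l|) ≤ |ρ| → |ρ| ≤ 1 / (|d| * L) / |l| →
      MapsTo (fun x : ℝ => ρ * x + t) (Icc 0 1) (Icc 0 1) →
      κ ≤ ∫ y, Real.sin (d * (l * g (ρ * y + t)) / 2) ^ 2 ∂μ := by
  have := S.prob
  obtain ⟨t0, ht0, hsm⟩ := S.small
  have hd' : 0 < |d| := abs_pos.2 hd
  have hlo := S.lo_pos
  set cc := 1 / (|d| * L) with hcc
  have hc : 0 < cc := by positivity
  set K := |d| * s * lo * cc / 2 with hK
  have hKp : 0 < K := by positivity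
  set σ := K * t0 / Real.pi with hσ
  have hpi := Real.pi_pos
  have hσp : 0 < σ := by positivity
  refine ⟨σ ^ 2 * (1/2), by positivity, fun g hg l hl ρ t h1 h2 hm => ?_⟩
  have hlp : 0 < |l| := hc.trans_le hl
  set θ : ℝ → ℝ := fun y => d * (l * g (ρ * y + t)) / 2 with hθ
  have hθc : ContinuousOn (fun y => Real.sin (θ y) ^ 2) (Icc 0 1) := by
    have := comp_aff_cont (hg.cont hL) hm
    have hθc' : ContinuousOn θ (Icc 0 1) := (continuousOn_const.mul (continuousOn_const.mul this)).div_const _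
    exact (Real.continuous_sin.comp_continuousOn hθc').pow 2
  have hmk := mul_meas_ge_le_integral_of_nonneg (μ := μ) (f := fun y => Real.sin (θ y) ^ 2)
    (Eventually.of_forall fun y => sq_nonneg _) (S.integrable hθc) (σ ^ 2)
  refine le_trans ?_ hmk
  refine mul_le_mul_of_nonneg_left ?_ (sq_nonneg _)
  set B : Set ℝ := {y | y ∈ Icc (0:ℝ) 1 ∧ Real.sin (θ y) ^ 2 < σ ^ 2} with hB
  have hBs : μ B ≤ 1 / 2 := by
    refine hsm B (fun y hy => hy.1) ?_
    rintro x ⟨hx, hx2⟩ y ⟨hy, hy2⟩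
    have a1 : |Real.sin (θ x)| ≤ σ := (abs_lt_of_sq_lt_sq hx2 hσp.le).le
    have a2 : |Real.sin (θ y)| ≤ σ := (abs_lt_of_sq_lt_sq hy2 hσp.le).le
    have a3 : |Real.sin (θ x - θ y)| ≤ 2 * σ := by
      rw [Real.sin_sub]
      refine (abs_sub _ _).trans ?_
      rw [abs_mul, abs_mul]
      nlinarith [Real.abs_cos_le_one (θ x), Real.abs_cos_le_one (θ y), abs_nonneg (Real.cos (θ x)),
        abs_nonneg (Real.cos (θ y)), abs_nonneg (Real.sin (θ x)), abs_nonneg (Real.sin (θ y))]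
    have a4 : |θ x - θ y| = |d| * |l| * |g (ρ * x + t) - g (ρ * y + t)| / 2 := by
      have : θ x - θ y = d * l * (g (ρ * x + t) - g (ρ * y + t)) / 2 := by simp only [hθ]; ring
      rw [this, abs_div, abs_mul, abs_mul]; simp
    obtain ⟨b1, b2⟩ := hg _ (hm hx) _ (hm hy)
    have a5 : |ρ * x + t - (ρ * y + t)| = |ρ| * |x - y| := by rw [← abs_mul]; congr 1; ring
    simp only [a5] at b1 b2
    have hxy : |x - y| ≤ 1 := by
      rw [abs_le]; constructor <;> linarith [hx.1, hx.2, hy.1, hy.2]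
    rw [le_div_iff₀ hlp] at h2
    rw [mul_div_assoc', div_le_iff₀ hlp] at h1
    have a6 : |θ x - θ y| ≤ Real.pi / 2 := by
      rw [a4]
      have : |d| * |l| * |g (ρ * x + t) - g (ρ * y + t)| ≤ 1 := by
        calc |d| * |l| * |g (ρ * x + t) - g (ρ * y + t)| ≤ |d| * |l| * (L * (|ρ| * 1)) := by
              refine mul_le_mul_of_nonneg_left (b2.trans ?_) (by positivity)
              gcongr
          _ = |d| * L * (|ρ| * |l|) := by ring
          _ ≤ |d| * L * cc := by gcongr
          _ = 1 := by rw [hcc]; field_simp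
      linarith [Real.pi_gt_three]
    have a7 := (Real.mul_abs_le_abs_sin a6).trans a3
    have a8 : |θ x - θ y| ≤ K * t0 := by
      have : K * t0 = σ * Real.pi := by rw [hσ]; field_simp
      rw [this]
      rw [div_mul_eq_mul_div, div_le_iff₀ hpi] at a7
      linarith
    have a9 : K * |x - y| ≤ |θ x - θ y| := by
      rw [a4, hK]
      have : |d| * s * (lo * cc) * |x - y| ≤ |d| * |l| * |g (ρ * x + t) - g (ρ * y + t)| := by
        calc |d| * s * (lo * cc) * |x - y| ≤ |d| * s * (|ρ| * |l|) * |x - y| := by gcongr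
          _ = |d| * |l| * (s * (|ρ| * |x - y|)) := by ring
          _ ≤ _ := by gcongr
      linarith
    exact le_of_mul_le_mul_left (a9.trans a8) hKp
  have hcov : Icc (0:ℝ) 1 ⊆ B ∪ {y | σ ^ 2 ≤ Real.sin (θ y) ^ 2} := by
    intro y hy
    by_cases h : Real.sin (θ y) ^ 2 < σ ^ 2
    · exact Or.inl ⟨hy, h⟩
    · exact Or.inr (not_lt.1 h)
  have h3 : μ.real (Icc 0 1) ≤ μ.real B + μ.real {y | σ ^ 2 ≤ Real.sin (θ y) ^ 2} :=
    (measureReal_mono hcov).trans (measureReal_union_le _ _)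
  have h4 : μ.real (Icc 0 1) = 1 := by simp [measureReal_def, S.supp]
  have h5 : μ.real B ≤ 1 / 2 := by
    rw [measureReal_def]
    have := ENNReal.toReal_mono (by simp) hBs
    simpa using this
  show 1 / 2 ≤ μ.real {y | σ ^ 2 ≤ Real.sin (θ y) ^ 2}
  linarith

lemma exists_pow_hi (S : Sys r c p lo hi μ) {δ : ℝ} (hδ : 0 < δ) : ∃ k : ℕ, hi ^ k ≤ δ := by
  obtain ⟨k, hk⟩ := exists_pow_lt_of_lt_one hδ S.hi_lt
  exact ⟨k, hk.le⟩

lemma gap1 (S : Sys r c p lo hi μ) (d s L C : ℝ) (hd : d ≠ 0) (hs : 0 < s) (hL : 0 < L) (hC : 0 ≤ C) :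
    ∃ κ > 0, ∀ g, BiLip s L g → ∀ l : ℝ, 1 / (|d| * L) ≤ |l| → ∀ ψ : ℝ → ℝ, Continuous ψ → (∀ x, 0 ≤ ψ x) →
      (∀ x y, ψ x ≤ Real.exp (C * |x - y|) * ψ y) → ∀ q : ℝ, |q| ≤ 1 → 
      κ * ∫ x, ψ (q * (l * g x)) ∂μ ≤ ∫ x, Real.sin (d * (l * g x) / 2) ^ 2 * ψ (q * (l * g x)) ∂μ := by
  have := S.prob
  obtain ⟨κ, hκ, h⟩ := gap0 S d s L hd hs hL
  set K := C * (1 / |d|) with hK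
  refine ⟨κ * Real.exp (-(2 * K)), by positivity, fun g hg l hl ψ hψc hψ0 hψ q hq => ?_⟩
  have hd' : 0 < |d| := abs_pos.2 hd
  have hc : 0 < 1 / (|d| * L) := by positivity
  have hlp : 0 < |l| := hc.trans_le hl
  have hδ : 0 < 1 / (|d| * L) / |l| := by positivity
  obtain ⟨k, hk⟩ := exists_pow_hi S hδ
  have hgc := hg.cont hL
  have c1 : ContinuousOn (fun x => ψ (q * (l * g x))) (Icc 0 1) := hψc.comp_continuousOn (by fun_prop)
  have c3 : ContinuousOn (fun x => Real.sin (d * (l * g x) / 2) ^ 2) (Icc 0 1) :=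
    (Real.continuous_sin.comp_continuousOn (by fun_prop)).pow 2
  have c2 : ContinuousOn (fun x => Real.sin (d * (l * g x) / 2) ^ 2 * ψ (q * (l * g x))) (Icc 0 1) := c3.mul c1
  have main := S.localize k _ hk (by rw [div_le_one hlp]; exact hl)
    (fun x => (κ * Real.exp (-(2 * K))) * ψ (q * (l * g x)))
    (fun x => Real.sin (d * (l * g x) / 2) ^ 2 * ψ (q * (l * g x)))
    ((S.integrable c1).const_mul _) (S.integrable c2) ?_
  · rw [integral_const_mul] at main
    exact (le_abs_self _).trans main
  rintro ρ t ⟨h1, h2, hm, -⟩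
  have d1 := comp_aff_cont c1 hm
  have d2 := comp_aff_cont c2 hm
  have d3 := comp_aff_cont c3 hm
  have hz : (0:ℝ) ∈ Icc (0:ℝ) 1 := by simp
  set ψ0 := ψ (q * (l * g (ρ * 0 + t))) with hψ0'
  have osc : ∀ y ∈ Icc (0:ℝ) 1, C * |q * (l * g (ρ * y + t)) - q * (l * g (ρ * 0 + t))| ≤ K := by
    intro y hy
    rw [← mul_sub, ← mul_sub, abs_mul, abs_mul, hK]
    refine mul_le_mul_of_nonneg_left ?_ hC
    have b2 := (hg _ (hm hy) _ (hm hz)).2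
    have a5 : |ρ * y + t - (ρ * 0 + t)| = |ρ| * |y| := by rw [← abs_mul]; congr 1; ring
    simp only [a5] at b2
    have hy1 : |y| ≤ 1 := by rw [abs_of_nonneg hy.1]; exact hy.2
    rw [le_div_iff₀ hlp] at h2
    calc |q| * (|l| * |g (ρ * y + t) - g (ρ * 0 + t)|) ≤ 1 * (|l| * (L * (|ρ| * 1))) := by
          refine mul_le_mul hq (mul_le_mul_of_nonneg_left (b2.trans ?_) hlp.le) (by positivity) (by norm_num)
          gcongr
      _ = L * (|ρ| * |l|) := by ring
      _ ≤ L * (1 / (|d| * L)) := by gcongr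
      _ = 1 / |d| := by field_simp
  have up : ∀ y ∈ Icc (0:ℝ) 1, ψ (q * (l * g (ρ * y + t))) ≤ Real.exp K * ψ0 := by
    intro y hy
    exact (hψ _ _).trans (mul_le_mul_of_nonneg_right (Real.exp_le_exp.2 (osc y hy)) (hψ0 _))
  have dn : ∀ y ∈ Icc (0:ℝ) 1, Real.exp (-K) * ψ0 ≤ ψ (q * (l * g (ρ * y + t))) := by
    intro y hy
    have : ψ0 ≤ Real.exp K * ψ (q * (l * g (ρ * y + t))) := by
      refine (hψ _ (q * (l * g (ρ * y + t)))).trans (mul_le_mul_of_nonneg_right (Real.exp_le_exp.2 ?_) (hψ0 _))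
      rw [abs_sub_comm]
      exact osc y hy
    rw [Real.exp_neg, inv_mul_le_iff₀ (Real.exp_pos _)]
    exact this
  rw [integral_const_mul, Real.norm_of_nonneg (mul_nonneg (by positivity) (integral_nonneg fun _ => hψ0 _))]
  have e1 : ∫ y, ψ (q * (l * g (ρ * y + t))) ∂μ ≤ Real.exp K * ψ0 := by
    have := S.mono d1 continuousOn_const up
    simpa using this
  have e2 : κ * (Real.exp (-K) * ψ0) ≤ ∫ y, Real.sin (d * (l * g (ρ * y + t)) / 2) ^ 2 * ψ (q * (l * g (ρ * y + t))) ∂μ := by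
    have h3 := h g hg l hl ρ t h1 h2 hm
    have h4 := S.mono (d3.mul continuousOn_const) d2 (fun y hy => mul_le_mul_of_nonneg_left (dn y hy) (sq_nonneg (Real.sin (d * (l * g (ρ * y + t)) / 2))))
    simp only [Pi.mul_apply] at h4
    rw [integral_mul_const] at h4
    refine le_trans ?_ h4
    exact mul_le_mul_of_nonneg_right h3 (mul_nonneg (Real.exp_pos _).le (hψ0 _))
  refine le_trans ?_ e2
  calc κ * Real.exp (-(2 * K)) * ∫ y, ψ (q * (l * g (ρ * y + t))) ∂μ ≤ κ * Real.exp (-(2 * K)) * (Real.exp K * ψ0) := by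
        gcongr
    _ = κ * (Real.exp (-(2 * K)) * Real.exp K * ψ0) := by ring
    _ = κ * (Real.exp (-K) * ψ0) := by rw [← Real.exp_add]; congr 3; ring

lemma decay (S : Sys r c p lo hi μ) (a0 : ι) (d s L : ℝ) (hd : d ≠ 0) (hs : 0 < s) (hL : 0 < L) :
    ∃ θ : ℝ, 0 ≤ θ ∧ θ < 1 ∧ ∀ g, BiLip s L g → ∀ N : ℕ, ∀ l : ℝ, 1 / (|d| * L) ≤ lo ^ N * |l| → 
      ∫ x, HH r p a0 d N (l * g x) ∂μ ≤ θ ^ N := by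
  classical
  have := S.prob
  have hh : 0 < 1 - hi := by linarith [S.hi_lt]
  have hlo := S.lo_pos
  obtain ⟨κ', hκ', gap'⟩ := gap1 S d s L (|d| / (1 - hi)) hd hs hL (by positivity)
  set κ := min κ' 1 with hκdef
  have hκ : 0 < κ := lt_min hκ' one_pos
  have hκ1 : κ ≤ 1 := min_le_right _ _
  have hp0 := S.p_pos a0
  have hp1 : p a0 ≤ 1 := by
    rw [← S.p_sum]
    exact Finset.single_le_sum (fun a _ => (S.p_pos a).le) (Finset.mem_univ a0)
  refine ⟨1 - p a0 * κ / 2, by nlinarith, by nlinarith [mul_pos hp0 hκ], fun g hg N => ?_⟩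
  set θ := 1 - p a0 * κ / 2 with hθ
  have hgc := hg.cont hL
  induction N with
  | zero => intro l hl; simp [HH]
  | succ N ih =>
    intro l hl
    have hra : ∀ a, |r a| ≤ 1 := fun a => (S.le_hi a).trans S.hi_lt.le
    have hlo1 : lo ≤ 1 := S.lo_hi.trans S.hi_lt.le
    have hl1 : 1 / (|d| * L) ≤ |l| :=
      hl.trans (mul_le_of_le_one_left (abs_nonneg _) (pow_le_one₀ hlo.le hlo1))
    have hI : ∀ a, ∫ x, HH r p a0 d N (r a * (l * g x)) ∂μ ≤ θ ^ N := by
      intro a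
      have := ih (r a * l) ?_
      · simpa only [mul_assoc] using this
      · refine hl.trans ?_
        rw [abs_mul, pow_succ, mul_assoc]
        have := S.lo_le a
        gcongr
    have cN : ∀ a, ContinuousOn (fun x => HH r p a0 d N (r a * (l * g x))) (Icc 0 1) := fun a =>
      (HH_cont r p a0 d N).comp_continuousOn (by fun_prop)
    have cs : ContinuousOn (fun x => Real.sin (d * (l * g x) / 2) ^ 2) (Icc 0 1) :=
      (Real.continuous_sin.comp_continuousOn (by fun_prop)).pow 2
    have e : ∀ x, HH r p a0 d (N+1) (l * g x) = ∑ a, p a * HH r p a0 d N (r a * (l * g x)) -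
        p a0 / 2 * (Real.sin (d * (l * g x) / 2) ^ 2 * HH r p a0 d N (r a0 * (l * g x))) := by
      intro x
      rw [HH_succ, ← Finset.add_sum_erase _ _ (Finset.mem_univ a0),
        ← Finset.add_sum_erase Finset.univ (fun a => p a * HH r p a0 d N (r a * (l * g x))) (Finset.mem_univ a0)]
      rw [if_pos rfl]
      have : ∑ a ∈ Finset.univ.erase a0, p a * (if a = a0 then 1 - Real.sin (d * (l * g x) / 2) ^ 2 / 2 else 1) * HH r p a0 d N (r a * (l * g x))
        = ∑ a ∈ Finset.univ.erase a0, p a * HH r p a0 d N (r a * (l * g x)) := by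
        refine Finset.sum_congr rfl fun a ha => ?_
        rw [if_neg (by simpa using ha), mul_one]
      rw [this]; ring
    simp only [e]
    have c4 : ContinuousOn (fun x => Real.sin (d * (l * g x) / 2) ^ 2 * HH r p a0 d N (r a0 * (l * g x))) (Icc 0 1) :=
      cs.mul (cN a0)
    rw [integral_sub (integrable_finsetSum _ fun a _ => (S.integrable (cN a)).const_mul _)
      ((S.integrable c4).const_mul _), integral_finsetSum _ (fun a _ => (S.integrable (cN a)).const_mul _),
      integral_const_mul]
    simp only [integral_const_mul]
    have hg1 := gap' g hg l hl1 (HH r p a0 d N) (HH_cont _ _ _ _ _) (HH_nonneg S _ _ _) (HH_good S _ _ _) (r a0) (hra a0)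
    have hI0 : 0 ≤ ∫ x, HH r p a0 d N (r a0 * (l * g x)) ∂μ := integral_nonneg fun _ => HH_nonneg S _ _ _ _
    have hg2 : κ * ∫ x, HH r p a0 d N (r a0 * (l * g x)) ∂μ ≤ ∫ x, Real.sin (d * (l * g x) / 2) ^ 2 * HH r p a0 d N (r a0 * (l * g x)) ∂μ :=
      le_trans (mul_le_mul_of_nonneg_right (min_le_left _ _) hI0) hg1
    rw [← Finset.add_sum_erase _ _ (Finset.mem_univ a0)]
    have hs1 : ∑ a ∈ Finset.univ.erase a0, p a * ∫ x, HH r p a0 d N (r a * (l * g x)) ∂μ ≤ (1 - p a0) * θ ^ N := by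
      have : 1 - p a0 = ∑ a ∈ Finset.univ.erase a0, p a := by
        rw [← S.p_sum, ← Finset.add_sum_erase Finset.univ p (Finset.mem_univ a0)]; ring
      rw [this, Finset.sum_mul]
      exact Finset.sum_le_sum fun a _ => mul_le_mul_of_nonneg_left (hI a) (S.p_pos a).le
    have hs2 := mul_le_mul_of_nonneg_left hg2 (by positivity : 0 ≤ p a0 / 2)
    have hs3 := mul_le_mul_of_nonneg_left (hI a0) (by nlinarith : 0 ≤ p a0 - p a0 / 2 * κ)
    rw [pow_succ]
    have : θ ^ N * θ = (1 - p a0) * θ ^ N + (p a0 - p a0 / 2 * κ) * θ ^ N := by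
      conv_lhs => rw [hθ]
      ring
    rw [this]
    linarith
lemma taylor {s L : ℝ} {f g : ℝ → ℝ} (hL : 0 < L) (hg : BiLip s L g)
    (hf : ∀ x ∈ Icc (0:ℝ) 1, HasDerivWithinAt f (g x) (Icc 0 1) x) {x t : ℝ} (hx : x ∈ Icc (0:ℝ) 1)
    (ht : t ∈ Icc (0:ℝ) 1) : |f x - f t - g t * (x - t)| ≤ L * |x - t| ^ 2 := by
  have hsub : uIcc t x ⊆ Icc (0:ℝ) 1 := uIcc_subset_Icc ht hx
  have := Convex.norm_image_sub_le_of_norm_hasDerivWithin_le (f := fun y => f y - g t * y)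
    (f' := fun y => g y - g t) (C := L * |x - t|) (s := uIcc t x) (x := t) (y := x) ?_ ?_ (convex_uIcc _ _)
    left_mem_uIcc right_mem_uIcc
  · simp only [Real.norm_eq_abs] at this
    calc _ = |f x - g t * x - (f t - g t * t)| := by congr 1; ring
      _ ≤ _ := this
      _ = _ := by ring
  · intro y hy
    have h1 := (hf y (hsub hy)).mono hsub
    have h2 := h1.sub ((hasDerivWithinAt_id y (uIcc t x)).const_mul (g t))
    rw [mul_one] at h2
    exact h2
  · intro y hy
    rw [Real.norm_eq_abs]
    refine (hg y (hsub hy) t ht).2.trans ?_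
    refine mul_le_mul_of_nonneg_left ?_ hL.le
    exact abs_sub_left_of_mem_uIcc hy

lemma step (S : Sys r c p lo hi μ) (a0 b0 : ι) (hab : a0 ≠ b0) (hr : r a0 = r b0) (hp : p a0 = p b0)
    {s L θ : ℝ} (hL : 0 < L) 
    {f g : ℝ → ℝ} (hg : BiLip s L g)
    (hf : ∀ x ∈ Icc (0:ℝ) 1, HasDerivWithinAt f (g x) (Icc 0 1) x)
    (N k : ℕ) (δ ξ ε : ℝ) (hδ : 0 < δ) (hδ1 : δ ≤ 1) (hk : hi ^ k ≤ δ) (hξ : |ξ| * δ ^ 2 = ε)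
    (hθ0 : 0 ≤ θ)
    (hθ : ∀ l : ℝ, |ξ| * (lo * δ) ≤ |l| → ∫ x, HH r p a0 (c a0 - c b0) N (l * g x) ∂μ ≤ θ ^ N) :
    ‖∫ x, EE (ξ * f x) ∂μ‖ ≤ L * ε + Real.exp (|c a0 - c b0| / (1 - hi) * (L * ε)) *
      (((k:ℝ) + 1) ^ (Fintype.card ι) * θ ^ N) := by
  classical
  have := S.prob
  set d := c a0 - c b0 with hd
  have hh : 0 < 1 - hi := by linarith [S.hi_lt]
  set C := |d| / (1 - hi) with hC
  have hC0 : 0 ≤ C := by positivity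
  have hlo := S.lo_pos
  have hε : 0 ≤ ε := by rw [← hξ]; positivity
  set R0 : Finset ℝ := (Fintype.piFinset fun _ : ι => Finset.range (k+1)).image (fun n => ∏ a, r a ^ n a) with hR0
  set R := R0.filter (fun ρ => lo * δ ≤ |ρ|) with hR
  have hcard : (R.card : ℝ) ≤ ((k:ℝ) + 1) ^ (Fintype.card ι) := by
    have h1 : R.card ≤ (k+1) ^ (Fintype.card ι) := by
      refine (Finset.card_filter_le _ _).trans (Finset.card_image_le.trans ?_)
      simp
    exact_mod_cast h1
  have hgc := hg.cont hL
  have hfc : ContinuousOn f (Icc 0 1) := fun x hx => (hf x hx).continuousWithinAt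
  have cH : ∀ q : ℝ, ContinuousOn (fun x => HH r p a0 d N (q * g x)) (Icc 0 1) := fun q =>
    (HH_cont r p a0 d N).comp_continuousOn (by fun_prop)
  have cA : ContinuousOn (fun x => L * ε + Real.exp (C * (L * ε)) * ∑ ρ ∈ R, HH r p a0 d N (ξ * ρ * g x)) (Icc 0 1) := by
    refine continuousOn_const.add (continuousOn_const.mul ?_)
    exact continuousOn_finsetSum _ fun ρ _ => cH _
  have cu : ContinuousOn (fun x => EE (ξ * f x)) (Icc 0 1) := EE_cont.comp_continuousOn (by fun_prop)
  refine (S.localize k δ hk hδ1 _ _ (S.integrable cu) (S.integrable cA) ?_).trans ?_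
  · rintro ρ t ⟨h1, h2, hm, n, hn, hρ⟩
    have hρR : ρ ∈ R := by
      rw [hR, Finset.mem_filter, hR0]
      refine ⟨Finset.mem_image.2 ⟨n, ?_, hρ.symm⟩, h1⟩
      simp only [Fintype.mem_piFinset, Finset.mem_range]
      intro a; have := hn a; omega
    have ht : t ∈ Icc (0:ℝ) 1 := by simpa using hm (show (0:ℝ) ∈ Icc (0:ℝ) 1 by simp)
    have hρ2 : |ξ| * |ρ| ^ 2 ≤ ε := by rw [← hξ]; gcongr
    have lin : ‖∫ x, EE (ξ * f (ρ * x + t)) ∂μ‖ ≤ L * ε + ‖∫ x, EE (ξ * ρ * g t * x) ∂μ‖ := by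
      have cv : Continuous (fun x => EE (ξ * (f t + g t * (ρ * x)))) := EE_cont.comp (by fun_prop)
      have e1 : ‖∫ x, EE (ξ * ρ * g t * x) ∂μ‖ = ‖∫ x, EE (ξ * (f t + g t * (ρ * x))) ∂μ‖ := by
        have : ∀ x, EE (ξ * (f t + g t * (ρ * x))) = EE (ξ * f t) * EE (ξ * ρ * g t * x) := by
          intro x; rw [← EE_add]; congr 1; ring
        simp only [this]
        rw [integral_const_mul, norm_mul, EE_norm, one_mul]
      rw [e1]
      have e2 : ‖∫ x, EE (ξ * f (ρ * x + t)) ∂μ - ∫ x, EE (ξ * (f t + g t * (ρ * x))) ∂μ‖ ≤ L * ε := by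
        rw [← integral_sub (S.integrable (comp_aff_cont cu hm)) (S.integrable cv.continuousOn)]
        have := norm_integral_le_of_norm_le_const (μ := μ) (C := L * ε)
          (f := fun x => EE (ξ * f (ρ * x + t)) - EE (ξ * (f t + g t * (ρ * x)))) ?_
        · simpa using this
        · refine S.ae_mem.mono fun x hx => ?_
          refine (EE_lip _ _).trans ?_
          have h3 := taylor hL hg hf (hm hx) ht
          simp only [add_sub_cancel_right] at h3
          rw [← mul_sub, abs_mul]
          have hx1 : |x| ≤ 1 := by rw [abs_of_nonneg hx.1]; exact hx.2
          have h4 : |ρ * x| ≤ |ρ| := by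
            rw [abs_mul]; exact mul_le_of_le_one_right (abs_nonneg _) hx1
          calc |ξ| * |f (ρ * x + t) - (f t + g t * (ρ * x))| ≤ |ξ| * (L * |ρ| ^ 2) := by
                refine mul_le_mul_of_nonneg_left ?_ (abs_nonneg _)
                rw [← sub_sub]
                refine h3.trans ?_
                gcongr
            _ = L * (|ξ| * |ρ| ^ 2) := by ring
            _ ≤ L * ε := by gcongr
      have := norm_sub_norm_le (∫ x, EE (ξ * f (ρ * x + t)) ∂μ) (∫ x, EE (ξ * (f t + g t * (ρ * x))) ∂μ)
      linarith
    refine lin.trans ?_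
    have hmu := mu_le_HH S a0 b0 hab hr hp N (ξ * ρ * g t)
    have := S.mono (u := fun _ => L * ε + ‖∫ x, EE (ξ * ρ * g t * x) ∂μ‖) continuousOn_const (comp_aff_cont cA hm) ?_
    · simpa using this
    · intro x hx
      refine add_le_add le_rfl (hmu.trans ?_)
      have h5 := HH_good S a0 d N (ξ * ρ * g t) (ξ * ρ * g (ρ * x + t))
      refine h5.trans (mul_le_mul (Real.exp_le_exp.2 (mul_le_mul_of_nonneg_left ?_ hC0)) ?_ (HH_nonneg S _ _ _ _) (Real.exp_pos _).le)
      · rw [← mul_sub, abs_mul, abs_mul]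
        have h6 := (hg t ht _ (hm hx)).2
        have hx1 : |x| ≤ 1 := by rw [abs_of_nonneg hx.1]; exact hx.2
        have h7 : |t - (ρ * x + t)| ≤ |ρ| := by
          rw [sub_add_cancel_right, abs_neg, abs_mul]; exact mul_le_of_le_one_right (abs_nonneg _) hx1
        calc |ξ| * |ρ| * |g t - g (ρ * x + t)| ≤ |ξ| * |ρ| * (L * |ρ|) := by
              refine mul_le_mul_of_nonneg_left (h6.trans ?_) (by positivity)
              gcongr
          _ = L * (|ξ| * |ρ| ^ 2) := by ring
          _ ≤ L * ε := by gcongr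
      · exact Finset.single_le_sum (f := fun ρ' => HH r p a0 d N (ξ * ρ' * g (ρ * x + t))) (fun _ _ => HH_nonneg S _ _ _ _) hρR
  · have iH : ∀ ρ ∈ R, Integrable (fun x => HH r p a0 d N (ξ * ρ * g x)) μ := fun ρ _ => S.integrable (cH _)
    rw [integral_add (integrable_const _) ((integrable_finsetSum _ iH).const_mul _), integral_const,
      integral_const_mul (Real.exp (C * (L * ε))), integral_finsetSum _ iH]
    simp only [probReal_univ, one_smul]
    gcongr
    calc ∑ ρ ∈ R, ∫ x, HH r p a0 d N (ξ * ρ * g x) ∂μ ≤ ∑ ρ ∈ R, θ ^ N := by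
          refine Finset.sum_le_sum fun ρ hρ => hθ _ ?_
          rw [abs_mul]
          have := (Finset.mem_filter.1 hρ).2
          gcongr
      _ = R.card * θ ^ N := by simp
      _ ≤ _ := by gcongr

lemma main_est (S : Sys r c p lo hi μ) (a0 b0 : ι) (hab : a0 ≠ b0) (hr : r a0 = r b0) (hp : p a0 = p b0)
    (hc : c a0 ≠ c b0) {s L ε' : ℝ} (hs : 0 < s) (hL : 0 < L) (hε' : 0 < ε') :
    ∃ Ξ : ℝ, ∀ f g : ℝ → ℝ, BiLip s L g → 
    (∀ x ∈ Icc (0:ℝ) 1, HasDerivWithinAt f (g x) (Icc 0 1) x) → ∀ ξ : ℝ, Ξ ≤ |ξ| →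
    ‖∫ x, EE (ξ * f x) ∂μ‖ ≤ ε' := by
  have hdne : c a0 - c b0 ≠ 0 := sub_ne_zero.2 hc
  obtain ⟨θ, hθ0, hθ1, hdec⟩ := decay S a0 (c a0 - c b0) s L hdne hs hL
  set d := c a0 - c b0 with hd
  have hd' : 0 < |d| := abs_pos.2 hdne
  set Λ := 1 / (|d| * L) with hΛ
  have hΛ0 : 0 < Λ := by positivity
  set ε := ε' / (2 * L) with hε
  have hε0 : 0 < ε := by positivity
  have hlo := S.lo_pos
  have hlo1 : lo < 1 := S.lo_hi.trans_lt S.hi_lt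
  have hhi : 0 < hi := hlo.trans_le S.lo_hi
  obtain ⟨j, hj⟩ := exists_pow_hi S hlo
  obtain ⟨k0, hk0⟩ := exists_pow_hi S (show 0 < ε / Λ by positivity)
  set M := Real.exp (|d| / (1 - hi) * (L * ε)) with hM
  set n := Fintype.card ι
  set b : ℕ := k0 + 1 + 3 * j with hb
  have hlim : Tendsto (fun N : ℕ => M * ((b:ℝ) ^ n * ((N:ℝ) ^ n * θ ^ N))) atTop (nhds 0) := by
    have := tendsto_pow_const_mul_const_pow_of_abs_lt_one n (r := θ) (by rw [abs_of_nonneg hθ0]; exact hθ1)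
    simpa using (this.const_mul ((b:ℝ) ^ n)).const_mul M
  have hev := hlim.eventually (gt_mem_nhds (show 0 < ε' / 2 by positivity))
  obtain ⟨N0, hN0⟩ := eventually_atTop.1 (hev.and (eventually_ge_atTop 1))
  set X0 := (1 / lo) ^ (N0 + 2) with hX0
  refine ⟨max ε ((Λ * X0) ^ 2 / ε), fun f g hg hf ξ hξ => ?_⟩
  have hξ1 := (le_max_left _ _).trans hξ
  have hξ2 := (le_max_right _ _).trans hξ
  set Y := Real.sqrt (ε * |ξ|) with hY
  have hY2 : Y ^ 2 = ε * |ξ| := Real.sq_sqrt (by positivity)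
  have hX0p : 0 < X0 := by positivity
  have hYX : Λ * X0 ≤ Y := by
    rw [hY]
    refine Real.le_sqrt_of_sq_le ?_
    rw [div_le_iff₀ hε0] at hξ2
    linarith
  have hYp : 0 < Y := lt_of_lt_of_le (by positivity) hYX
  have hYε : ε ≤ Y := by
    rw [hY]
    refine Real.le_sqrt_of_sq_le ?_
    rw [sq]; gcongr
  have hinv : 1 < 1 / lo := by rw [lt_div_iff₀ hlo]; linarith
  have hXX : X0 ≤ Y / Λ := by rw [le_div_iff₀ hΛ0]; linarith
  obtain ⟨N', hN1, hN2⟩ := exists_nat_pow_near (x := Y / Λ) ((one_le_pow₀ hinv.le).trans hXX) hinv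
  have hN' : N0 + 2 < N' + 1 := (pow_lt_pow_iff_right₀ hinv).1 (hXX.trans_lt hN2)
  obtain ⟨N, rfl⟩ : ∃ N, N' = N + 1 := ⟨N' - 1, by omega⟩
  have hNN : N0 ≤ N := by omega
  obtain ⟨hfin, hN1'⟩ := hN0 N hNN
  have hξp : 0 < |ξ| := hε0.trans_le hξ1
  have q1 : |ξ| * (ε / Y) = Y := by
    field_simp; linarith
  have q2 : |ξ| * (ε / Y) ^ 2 = ε := by
    field_simp; linarith
  have q3 : hi ^ (k0 + j * (N + 2)) ≤ ε / Y := by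
    have h1 : Y ≤ Λ * (1 / lo) ^ (N + 2) := by
      rw [div_lt_iff₀ hΛ0] at hN2
      linarith
    have h2 : ε / (Λ * (1 / lo) ^ (N + 2)) ≤ ε / Y := by gcongr
    refine le_trans ?_ h2
    rw [pow_add, pow_mul]
    have h3 : ε / (Λ * (1 / lo) ^ (N + 2)) = ε / Λ * lo ^ (N + 2) := by
      rw [one_div, inv_pow]; field_simp
    rw [h3]
    gcongr
  have hst := step S a0 b0 hab hr hp hL hg hf N (k0 + j * (N + 2)) (ε / Y) ξ ε (by positivity)
    (by rw [div_le_one hYp]; exact hYε) q3 q2 hθ0 (fun l hl => hdec g hg N l ?_)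
  · refine hst.trans ?_
    have t1 : L * ε = ε' / 2 := by rw [hε]; field_simp
    have t2 : (((k0 + j * (N + 2) : ℕ):ℝ) + 1) ≤ b * N := by
      have : k0 + j * (N + 2) + 1 ≤ b * N := by rw [hb]; nlinarith
      exact_mod_cast this
    have t3 : (((k0 + j * (N + 2) : ℕ):ℝ) + 1) ^ n * θ ^ N ≤ (b:ℝ) ^ n * ((N:ℝ) ^ n * θ ^ N) := by
      rw [← mul_assoc, ← mul_pow]
      gcongr
    have t4 := mul_le_mul_of_nonneg_left t3 (Real.exp_pos (|d| / (1 - hi) * (L * ε))).le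
    change L * ε + M * ((((k0 + j * (N + 2) : ℕ):ℝ) + 1) ^ n * θ ^ N) ≤ ε'
    change M * _ ≤ M * _ at t4
    linarith
  · rw [mul_left_comm, q1] at hl
    rw [le_div_iff₀ hΛ0, one_div, inv_pow, inv_mul_le_iff₀ (by positivity), pow_succ] at hN1
    refine hN1.trans ?_
    rw [mul_assoc]
    gcongr
lemma biLip_of_deriv {s L : ℝ} {G H : ℝ → ℝ}
    (hG : ∀ x ∈ Icc (0:ℝ) 1, HasDerivWithinAt G (H x) (Icc 0 1) x)
    (h1 : ∀ x ∈ Icc (0:ℝ) 1, s ≤ |H x|) (h2 : ∀ x ∈ Icc (0:ℝ) 1, |H x| ≤ L) : BiLip s L G := by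
  have key : ∀ x ∈ Icc (0:ℝ) 1, ∀ y ∈ Icc (0:ℝ) 1, x < y →
      s * |x - y| ≤ |G x - G y| ∧ |G x - G y| ≤ L * |x - y| := by
    intro x hx y hy hxy
    have hsub : Icc x y ⊆ Icc (0:ℝ) 1 := Icc_subset_Icc hx.1 hy.2
    obtain ⟨z, hz, hz2⟩ := exists_hasDerivAt_eq_slope G H hxy
      (fun z hz => (hG z (hsub hz)).continuousWithinAt.mono hsub)
      (fun z hz => (hG z (hsub (Ioo_subset_Icc_self hz))).hasDerivAt
        (Icc_mem_nhds (lt_of_le_of_lt hx.1 hz.1) (lt_of_lt_of_le hz.2 hy.2)))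
    have hz' := hsub (Ioo_subset_Icc_self hz)
    have e : |G x - G y| = |H z| * |x - y| := by
      rw [hz2, abs_sub_comm, abs_sub_comm x y, ← abs_mul, div_mul_cancel₀]
      linarith
    rw [e]
    exact ⟨mul_le_mul_of_nonneg_right (h1 z hz') (abs_nonneg _), mul_le_mul_of_nonneg_right (h2 z hz') (abs_nonneg _)⟩
  intro x hx y hy
  rcases lt_trichotomy x y with h | h | h
  · exact key x hx y hy h
  · subst h; simp
  · have := key y hy x hx h
    rwa [abs_sub_comm, abs_sub_comm (G x)]

lemma exists_small_level (S : Sys r c p lo hi μ) {h : ℝ → ℝ} (hc : ContinuousOn h (Icc 0 1))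
    (hZ : μ {x ∈ Icc (0:ℝ) 1 | h x = 0} = 0) {ε : ℝ} (hε : 0 < ε) :
    ∃ s > 0, μ.real {x ∈ Icc (0:ℝ) 1 | |h x| ≤ 2 * s} ≤ ε := by
  have := S.prob
  set B : ℕ → Set ℝ := fun n => {x ∈ Icc (0:ℝ) 1 | |h x| ≤ 1 / ((n:ℝ) + 1)} with hB
  have hmeas : ∀ n, MeasurableSet (B n) := fun n =>
    (hc.abs.preimage_isClosed_of_isClosed isClosed_Icc (isClosed_Iic (a := 1 / ((n:ℝ) + 1)))).measurableSet
  have hanti : Antitone B := by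
    intro n m hnm x hx
    refine ⟨hx.1, hx.2.trans ?_⟩
    exact one_div_le_one_div_of_le (by positivity) (by have : (n:ℝ) ≤ m := by exact_mod_cast hnm
                                                       linarith)
  have hI : ⋂ n, B n = {x ∈ Icc (0:ℝ) 1 | h x = 0} := by
    ext x
    simp only [mem_iInter, hB, mem_setOf_eq]
    constructor
    · intro hx
      refine ⟨(hx 0).1, ?_⟩
      have : |h x| ≤ 0 := ge_of_tendsto' tendsto_one_div_add_atTop_nhds_zero_nat fun n => (hx n).2
      exact abs_nonpos_iff.1 this
    · rintro ⟨hx, h0⟩ n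
      refine ⟨hx, ?_⟩
      rw [h0, abs_zero]; positivity
  have ht := tendsto_measure_iInter_atTop (μ := μ) (fun n => (hmeas n).nullMeasurableSet) hanti ⟨0, measure_ne_top _ _⟩
  rw [hI, hZ] at ht
  obtain ⟨n, hn⟩ := (ht.eventually (gt_mem_nhds (show (0:ℝ≥0∞) < ENNReal.ofReal ε by simpa using hε))).exists
  refine ⟨1 / ((n:ℝ) + 1) / 2, by positivity, ?_⟩
  rw [mul_div_cancel₀ _ (two_ne_zero)]
  rw [measureReal_def]
  exact ENNReal.toReal_le_of_le_ofReal hε.le hn.le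

lemma final (S : Sys r c p lo hi μ) (a0 b0 : ι) (hab : a0 ≠ b0) (hr : r a0 = r b0) (hp : p a0 = p b0)
    (hcab : c a0 ≠ c b0) (f : ℝ → ℝ) (hf : ContDiffOn ℝ 2 f (Set.Icc 0 1))
    (hZ : μ {x ∈ Set.Icc (0 : ℝ) 1 | iteratedDerivWithin 2 f (Set.Icc 0 1) x = 0} = 0) :
    Rajchman (Measure.map f μ) := by
  have := S.prob
  have hu : UniqueDiffOn ℝ (Icc (0:ℝ) 1) := uniqueDiffOn_Icc one_pos
  set h := iteratedDerivWithin 2 f (Icc (0:ℝ) 1) with hh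
  set g := derivWithin f (Icc (0:ℝ) 1) with hgdef
  have hhc : ContinuousOn h (Icc 0 1) := hf.continuousOn_iteratedDerivWithin le_rfl hu
  have hfd : ∀ x ∈ Icc (0:ℝ) 1, HasDerivWithinAt f (g x) (Icc 0 1) x := fun x hx =>
    (hf.differentiableOn (by norm_num) x hx).hasDerivWithinAt
  have hg1 : ContDiffOn ℝ 1 g (Icc 0 1) := hf.derivWithin hu (by norm_num)
  have hgd : ∀ x ∈ Icc (0:ℝ) 1, HasDerivWithinAt g (h x) (Icc 0 1) x := by
    intro x hx
    have h1 := (hg1.differentiableOn (by norm_num) x hx).hasDerivWithinAt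
    have h2 : h x = derivWithin g (Icc 0 1) x := by
      rw [hh, show (2:ℕ) = 1 + 1 from rfl, iteratedDerivWithin_succ]
      refine derivWithin_congr (fun y hy => ?_) ?_
      · rw [iteratedDerivWithin_one]
      · rw [iteratedDerivWithin_one]
    rwa [h2]
  have hfc : ContinuousOn f (Icc 0 1) := hf.continuousOn
  have hfm : AEMeasurable f μ := by
    have := hfc.aemeasurable (μ := μ) measurableSet_Icc
    rwa [S.restr] at this
  obtain ⟨L0, hL0⟩ := isCompact_Icc.exists_bound_of_continuousOn hhc
  set L := max L0 1 with hLdef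
  have hL : 0 < L := lt_of_lt_of_le one_pos (le_max_right _ _)
  have hhL : ∀ x ∈ Icc (0:ℝ) 1, |h x| ≤ L := fun x hx => (hL0 x hx).trans (le_max_left _ _)
  have hft : ∀ ξ, ft (Measure.map f μ) ξ = ∫ x, EE (2 * Real.pi * ξ * f x) ∂μ := by
    intro ξ
    unfold ft
    rw [integral_map hfm]
    · rfl
    · exact Continuous.aestronglyMeasurable (by fun_prop)
  rw [Rajchman, Metric.tendsto_nhds]
  intro ε' hε'
  set ε := ε' / 3 with hεdef
  have hε : 0 < ε := by positivity
  obtain ⟨s, hs, hBs⟩ := exists_small_level S hhc hZ hε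
  set B := {x ∈ Icc (0:ℝ) 1 | |h x| ≤ 2 * s} with hB
  have hBm : MeasurableSet B := 
    (hhc.abs.preimage_isClosed_of_isClosed isClosed_Icc (isClosed_Iic (a := 2 * s))).measurableSet
  obtain ⟨δ1, hδ1, huc⟩ := Metric.uniformContinuousOn_iff.1 (isCompact_Icc.uniformContinuousOn_of_continuous hhc) s hs
  set δ := min (δ1 / 2) 1 with hδ
  have hδ0 : 0 < δ := by positivity
  have hδle : δ ≤ 1 := min_le_right _ _
  have hδlt : δ < δ1 := lt_of_le_of_lt (min_le_left _ _) (by linarith)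
  have hlo := S.lo_pos
  set s' := (lo * δ) ^ 2 * s with hs'
  have hs'0 : 0 < s' := by positivity
  obtain ⟨Ξ, hΞ⟩ := main_est S a0 b0 hab hr hp hcab hs'0 hL hε
  obtain ⟨k, hk⟩ := exists_pow_hi S hδ0
  filter_upwards [(tendsto_norm_cocompact_atTop (E := ℝ)).eventually_ge_atTop Ξ] with ξ hξ
  rw [dist_zero_right, hft]
  set η := 2 * Real.pi * ξ with hη
  have hηξ : Ξ ≤ |η| := by
    refine hξ.trans ?_
    rw [hη, abs_mul, Real.norm_eq_abs, abs_of_pos Real.two_pi_pos]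
    refine le_mul_of_one_le_left (abs_nonneg _) ?_
    linarith [Real.pi_gt_three]
  have cu : ContinuousOn (fun x => EE (η * f x)) (Icc 0 1) := EE_cont.comp_continuousOn (by fun_prop)
  have iB : Integrable (B.indicator (fun _ => (1:ℝ))) μ := (integrable_const _).indicator hBm
  have main := S.localize k δ hk hδle (fun x => EE (η * f x)) (fun x => ε + B.indicator (fun _ => (1:ℝ)) x)
    (S.integrable cu) ((integrable_const _).add iB) ?_
  · rw [integral_add (integrable_const _) iB, integral_indicator_const _ hBm] at main
    simp only [integral_const, probReal_univ, one_smul, smul_eq_mul, mul_one] at main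
    have : ε' = 3 * ε := by rw [hεdef]; ring
    linarith
  rintro ρ t ⟨h1, h2, hm, -⟩
  have hρ1 : |ρ| ≤ 1 := h2.trans hδle
  by_cases hcase : ∀ y ∈ Icc (0:ℝ) 1, |h (ρ * y + t)| ≤ 2 * s
  · have e1 : ‖∫ x, EE (η * f (ρ * x + t)) ∂μ‖ ≤ 1 := by
      refine (norm_integral_le_integral_norm _).trans ?_
      simp [EE_norm]
    refine e1.trans ?_
    have e2 : ∫ x, (ε + B.indicator (fun _ => (1:ℝ)) (ρ * x + t)) ∂μ = ∫ x, (ε + 1) ∂μ := by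
      refine integral_congr_ae (S.ae_mem.mono fun x hx => ?_)
      have : ρ * x + t ∈ B := ⟨hm hx, hcase x hx⟩
      simp [this]
    rw [e2]
    simp; linarith
  · push Not at hcase
    obtain ⟨y, hy, hy2⟩ := hcase
    have hge : ∀ x ∈ Icc (0:ℝ) 1, s ≤ |h (ρ * x + t)| := by
      intro x hx
      have h3 := huc _ (hm hx) _ (hm hy) ?_
      · rw [Real.dist_eq] at h3
        have := abs_sub_abs_le_abs_sub (h (ρ * y + t)) (h (ρ * x + t))
        rw [abs_sub_comm] at this
        linarith
      · rw [Real.dist_eq]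
        have : ρ * x + t - (ρ * y + t) = ρ * (x - y) := by ring
        simp only [this]
        rw [abs_mul]
        have hxy : |x - y| ≤ 1 := by
          rw [abs_le]; constructor <;> linarith [hx.1, hx.2, hy.1, hy.2]
        calc |ρ| * |x - y| ≤ |ρ| * 1 := by gcongr
          _ < δ1 := by linarith
    have haff : ∀ x, HasDerivWithinAt (fun x : ℝ => ρ * x + t) ρ (Icc 0 1) x := by
      intro x
      have := ((hasDerivWithinAt_id x (Icc (0:ℝ) 1)).const_mul ρ).add_const t
      simpa using this
    have hF : ∀ x ∈ Icc (0:ℝ) 1, HasDerivWithinAt (fun x => f (ρ * x + t)) (ρ * g (ρ * x + t)) (Icc 0 1) x := by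
      intro x hx
      have := (hfd _ (hm hx)).comp x (haff x) hm
      rw [mul_comm]
      exact this
    have hG : ∀ x ∈ Icc (0:ℝ) 1, HasDerivWithinAt (fun x => ρ * g (ρ * x + t)) (ρ ^ 2 * h (ρ * x + t)) (Icc 0 1) x := by
      intro x hx
      have := ((hgd _ (hm hx)).comp x (haff x) hm).const_mul ρ
      have e : ρ ^ 2 * h (ρ * x + t) = ρ * (h (ρ * x + t) * ρ) := by ring
      rw [e]
      exact this
    have hbl : BiLip s' L (fun x => ρ * g (ρ * x + t)) := by
      refine biLip_of_deriv hG (fun x hx => ?_) (fun x hx => ?_)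
      · rw [abs_mul, abs_pow, hs']
        have := hge x hx
        gcongr
      · rw [abs_mul, abs_pow]
        have := hhL _ (hm hx)
        calc |ρ| ^ 2 * |h (ρ * x + t)| ≤ 1 * L := by
              gcongr
              exact pow_le_one₀ (abs_nonneg _) hρ1
          _ = L := one_mul _
    refine (hΞ _ _ hbl hF η hηξ).trans ?_
    have e3 : ∫ x, ε ∂μ ≤ ∫ x, (ε + B.indicator (fun _ => (1:ℝ)) (ρ * x + t)) ∂μ := by
      have hρ0 : ρ ≠ 0 := by
        rw [← abs_pos]; exact lt_of_lt_of_le (by positivity) h1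
      have i2 : Integrable (fun x => B.indicator (fun _ => (1:ℝ)) (ρ * x + t)) μ := by
        have : (fun x => B.indicator (fun _ => (1:ℝ)) (ρ * x + t)) = 
          ((fun x => ρ * x + t) ⁻¹' B).indicator (fun _ => (1:ℝ)) := by
          ext x; rfl
        rw [this]
        exact (integrable_const _).indicator ((aff_emb ρ t hρ0).measurable hBm)
      refine integral_mono (integrable_const _) ((integrable_const _).add i2) fun x => ?_
      have : 0 ≤ B.indicator (fun _ => (1:ℝ)) (ρ * x + t) := indicator_nonneg (fun _ _ => zero_le_one) _
      simp only [Pi.add_apply]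
      linarith
    simpa using e3
end

lemma exists_pair {m : ℕ} {r c p : Fin m → ℝ} {lo hi : ℝ} {μ : Measure ℝ} (hm : 0 < m) (S : Sys r c p lo hi μ) :
    ∃ a b, r a * c b + c a ≠ r b * c a + c b := by
  have := S.prob
  by_contra! hcon
  set a : Fin m := ⟨0, hm⟩
  have hlt : ∀ b, r b < 1 := fun b => lt_of_le_of_lt (le_abs_self _) ((S.le_hi b).trans_lt S.hi_lt)
  set x0 := c a / (1 - r a) with hx0
  have ha : 1 - r a ≠ 0 := by have := hlt a; linarith
  have hfix : ∀ b, r b * x0 + c b = x0 := by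
    intro b
    have := hcon a b
    rw [hx0]
    field_simp
    linarith
  have hcont : Continuous fun x : ℝ => |x - x0| := by fun_prop
  have hintg := S.integrable hcont.continuousOn
  have e := S.integral_eq hintg
  set I := ∫ x, |x - x0| ∂μ with hI
  have hI0 : 0 ≤ I := integral_nonneg fun _ => abs_nonneg _
  have e2 : I ≤ hi * I := by
    conv_lhs => rw [e]
    calc ∑ b, p b • ∫ x, |r b * x + c b - x0| ∂μ ≤ ∑ b, p b * (hi * I) := by
          refine Finset.sum_le_sum fun b _ => ?_
          rw [smul_eq_mul]
          refine mul_le_mul_of_nonneg_left ?_ (S.p_pos b).le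
          have : ∀ x, |r b * x + c b - x0| = |r b| * |x - x0| := by
            intro x
            rw [← abs_mul]; congr 1
            linarith [hfix b]
          simp only [this]
          rw [integral_const_mul]
          exact mul_le_mul_of_nonneg_right (S.le_hi b) hI0
      _ = hi * I := by rw [← Finset.sum_mul, S.p_sum, one_mul]
  have hI1 : I = 0 := by nlinarith [S.hi_lt]
  have hae := (integral_eq_zero_iff_of_nonneg (fun _ => abs_nonneg _) hintg).1 hI1
  have : μ {x0}ᶜ = 0 := by
    have : ∀ᵐ x ∂μ, x ∈ ({x0} : Set ℝ) := by
      filter_upwards [hae] with x hx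
      have : |x - x0| = 0 := hx
      rw [abs_eq_zero] at this
      simp; linarith
    exact this
  have h3 := (prob_compl_eq_zero_iff (measurableSet_singleton x0)).1 this
  rw [S.na x0] at h3
  exact zero_ne_one h3

lemma mkSys {ι : Type} [Fintype ι] [Nonempty ι] (r c p : ι → ℝ)
    (hr : ∀ a, 0 < |r a| ∧ |r a| < 1)
    (hmaps : ∀ a, MapsTo (fun x : ℝ => r a * x + c a) (Set.Icc 0 1) (Set.Icc 0 1))
    (hp : ∀ a, 0 < p a) (hpsum : ∑ a, p a = 1)
    (μ : Measure ℝ) (hprob : IsProbabilityMeasure μ) (hna : ∀ x : ℝ, μ {x} = 0)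
    (hsupp : μ (Set.Icc (0 : ℝ) 1) = 1)
    (hinv : μ = ∑ a, ENNReal.ofReal (p a) • Measure.map (fun x : ℝ => r a * x + c a) μ) :
    ∃ lo hi, Sys r c p lo hi μ := by
  obtain ⟨a, ha⟩ := Finite.exists_min (fun a => |r a|)
  obtain ⟨b, hb⟩ := Finite.exists_max (fun a => |r a|)
  exact ⟨|r a|, |r b|, (hr a).1, ha, hb, ha b, (hr b).2, hmaps, hp, hpsum, hprob, hna, hsupp, hinv⟩
/-- If `μ` is a self-similar measure on `[0,1]`, `f : [0,1] → ℝ` is `C²`, and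
`μ({x ∈ [0,1] : f''(x) = 0}) = 0`, then the pushforward `f_*μ` is Rajchman. -/
theorem stmt3 (m : ℕ) (hm : 0 < m) (r c p : Fin m → ℝ)
    (hr : ∀ a, 0 < |r a| ∧ |r a| < 1)
    (hmaps : ∀ a, MapsTo (fun x : ℝ => r a * x + c a) (Set.Icc 0 1) (Set.Icc 0 1))
    (hp : ∀ a, 0 < p a) (hpsum : ∑ a, p a = 1)
    (μ : Measure ℝ) (hprob : IsProbabilityMeasure μ) (hna : ∀ x : ℝ, μ {x} = 0)
    (hsupp : μ (Set.Icc (0 : ℝ) 1) = 1)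
    (hinv : μ = ∑ a, ENNReal.ofReal (p a) • Measure.map (fun x : ℝ => r a * x + c a) μ)
    (f : ℝ → ℝ) (hf : ContDiffOn ℝ 2 f (Set.Icc 0 1))
    (hZ : μ {x ∈ Set.Icc (0 : ℝ) 1 | iteratedDerivWithin 2 f (Set.Icc 0 1) x = 0} = 0) :
    Rajchman (Measure.map f μ) := by
  have : Nonempty (Fin m) := ⟨⟨0, hm⟩⟩
  obtain ⟨lo, hi, S⟩ := mkSys r c p hr hmaps hp hpsum μ hprob hna hsupp hinv
  obtain ⟨a, b, hab⟩ := exists_pair hm S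
  have hinv2 : μ = ∑ x : Fin m × Fin m, ENNReal.ofReal (p x.1 * p x.2) •
      Measure.map (fun y : ℝ => r x.1 * r x.2 * y + (r x.1 * c x.2 + c x.1)) μ := by
    have hms : ∀ ρ t : ℝ, Measurable (fun y : ℝ => ρ * y + t) := fun ρ t => by fun_prop
    have hstep : ∀ s, MeasurableSet s → μ s = ∑ a, ENNReal.ofReal (p a) * μ ((fun y : ℝ => r a * y + c a) ⁻¹' s) := by
      intro s hs
      conv_lhs => rw [hinv]
      simp only [Measure.coe_finset_sum, Finset.sum_apply, Measure.smul_apply, smul_eq_mul]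
      refine Finset.sum_congr rfl fun a _ => ?_
      rw [Measure.map_apply (hms _ _) hs]
    ext s hs
    rw [hstep s hs]
    simp only [Measure.coe_finset_sum, Finset.sum_apply, Measure.smul_apply, smul_eq_mul]
    rw [Fintype.sum_prod_type]
    refine Finset.sum_congr rfl fun a _ => ?_
    rw [hstep _ (hms _ _ hs), Finset.mul_sum]
    refine Finset.sum_congr rfl fun b _ => ?_
    rw [Measure.map_apply (hms _ _) hs, ENNReal.ofReal_mul (hp a).le, mul_assoc]
    congr 3
    ext y
    simp only [mem_preimage]
    rw [show r a * (r b * y + c b) + c a = r a * r b * y + (r a * c b + c a) by ring]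
  obtain ⟨lo2, hi2, S2⟩ := mkSys (fun x : Fin m × Fin m => r x.1 * r x.2)
    (fun x => r x.1 * c x.2 + c x.1) (fun x => p x.1 * p x.2)
    (fun x => by
      rw [abs_mul]
      exact ⟨mul_pos (hr _).1 (hr _).1, mul_lt_one_of_nonneg_of_lt_one_left (abs_nonneg _) (hr _).2 (hr _).2.le⟩)
    (fun x y hy => by
      have := hmaps x.1 (hmaps x.2 hy)
      convert this using 1
      simp only; ring)
    (fun x => mul_pos (hp _) (hp _))
    (by rw [Fintype.sum_prod_type]; simp only [← Finset.mul_sum, hpsum, mul_one])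
    μ hprob hna hsupp hinv2
  have hne : a ≠ b := by rintro rfl; exact hab rfl
  exact final S2 (a, b) (b, a) (by simp [hne]) (mul_comm _ _) (mul_comm _ _) hab f hf hZ
end
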